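/- arXiv:math/0104148 — 3 statements merged into one kernel-verified Lean document; each statement's English description precedes it below -/
import Mathlib

section
/- Let G be a finite cyclic group of order n, let γ ∈ G and let d be a divisor of n. Then Σ_{χ : ord(χ) = d} χ(γ) = c_d([G : ⟨γ⟩]), where the sum is over the complex multiplicative characters χ of G of order exactly d and c_d(m) := Σ_{1 ≤ k ≤ d, gcd(k,d)=1} e^{2πi k m / d} is the Ramanujan sum. -/
/-!
Write `γ = h ^ m` with `h` a generator of `G` and `m` a divisor of `n`
(`exists_generator_pow_dvd`); then `m = [G : ⟨γ⟩]`. A character is determined by its value at `h`,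
which can be any `n`-th root of unity, and the character has the same order as that value. Since
`d ∣ n`, evaluation at `h` is therefore a bijection from the characters of order `d` onto the
primitive `d`-th roots of unity (`bijOn_eval_generator`), and `χ γ = (χ h) ^ m`. Hence the
character sum is `∑ ζ ^ m` over those roots, which is the Ramanujan sum.
-/

open Polynomial Filter
open scoped Classical Pointwise

noncomputable section

/-- The reduction of a rational number mod `p`. -/
def ratRed (g : ℚ) (p : ℕ) : ZMod p := (g.num : ZMod p) * ((g.den : ℕ) : ZMod p)⁻¹

/-- `ord_p(g) = 0`: `p` divides neither the numerator nor the denominator of `g`. -/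
def OrdZero (g : ℚ) (p : ℕ) : Prop := ¬ (p : ℤ) ∣ g.num ∧ ¬ p ∣ g.den

/-- The residual index `r_g(p) = [(ℤ/pℤ)^* : ⟨g mod p⟩]`. -/
def resIndex (g : ℚ) (p : ℕ) : ℕ := (p - 1) / orderOf (ratRed g p)

/-- The decomposition `g = ± g₀ ^ h` with `g₀ > 0` not an exact power of a rational,
`h ≥ 1`, for `g ∈ ℚ ∖ {-1,0,1}`. -/
structure Decomp (g g₀ : ℚ) (h : ℕ) : Prop where
  ne_neg_one : g ≠ -1
  ne_zero : g ≠ 0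
  ne_one : g ≠ 1
  g₀_pos : 0 < g₀
  not_power : ¬ ∃ (r : ℚ) (k : ℕ), 2 ≤ k ∧ r ^ k = g₀
  h_pos : 1 ≤ h
  eq : g = g₀ ^ h ∨ g = -(g₀ ^ h)

instance (f : ℚ[X]) : NumberField (SplittingField f) where

/-- The splitting field `ℚ(ζ_m, g^{1/m})` of `X^m - g` over `ℚ`. -/
abbrev splitField (g : ℚ) (m : ℕ) : Type := SplittingField (X ^ m - C g)

/-- The quadratic field `ℚ(√g₀)`, realised as the splitting field of `X² - g₀`. -/
abbrev quadField (g₀ : ℚ) : Type := SplittingField (X ^ 2 - C g₀)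

/-- `d(g₀)`, the discriminant of the quadratic field `ℚ(√g₀)`. -/
def discQuad (g₀ : ℚ) : ℤ := NumberField.discr (quadField g₀)

/-- The field `ℚ(ζ_m, √g₀)`. -/
abbrev cycQuadField (g₀ : ℚ) (m : ℕ) : Type :=
  SplittingField ((X ^ m - 1) * (X ^ 2 - C g₀))

/-- A rational prime `p` splits completely in the number field `K`:
there are `[K:ℚ]` maximal ideals of the ring of integers above `p`. -/
def SplitsCompletely (K : Type*) [Field K] [NumberField K] (p : ℕ) : Prop :=
  Nat.card {P : Ideal (NumberField.RingOfIntegers K) //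
      P.IsMaximal ∧ (p : NumberField.RingOfIntegers K) ∈ P} = Module.finrank ℚ K

/-- The number of primes `p ≤ x` satisfying the predicate `P`. -/
def countPrimes (x : ℝ) (P : ℕ → Prop) : ℕ :=
  ((Finset.range (⌊x⌋₊ + 1)).filter fun p => p.Prime ∧ P p).card

/-- `N_{g,t}(x)`: the number of odd primes `p ≤ x` with `ord_p(g) = 0` and `r_g(p) = t`. -/
def Ngt (g : ℚ) (t : ℕ) (x : ℝ) : ℕ :=
  countPrimes x fun p => Odd p ∧ OrdZero g p ∧ resIndex g p = t

/-- `R_{g,t}(x)`: the number of odd primes `p ≤ x` with `ord_p(g) = 0` and `t ∣ r_g(p)`. -/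
def Rgt (g : ℚ) (t : ℕ) (x : ℝ) : ℕ :=
  countPrimes x fun p => Odd p ∧ OrdZero g p ∧ t ∣ resIndex g p

/-- `π(x; m, 1)`: the number of odd primes `p ≤ x` with `ord_p(g) = 0` and `p ≡ 1 (mod m)`. -/
def piCount (g : ℚ) (m : ℕ) (x : ℝ) : ℕ :=
  countPrimes x fun p => Odd p ∧ OrdZero g p ∧ p ≡ 1 [MOD m]

/-- `P_K(x)` restricted to odd primes `p` with `ord_p(g) = 0`. -/
def PKg (g : ℚ) (K : Type*) [Field K] [NumberField K] (x : ℝ) : ℕ :=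
  countPrimes x fun p => Odd p ∧ OrdZero g p ∧ SplitsCompletely K p

/-- The logarithmic integral `Li(x) = ∫₂ˣ dt / log t`. -/
def Li (x : ℝ) : ℝ := ∫ t in (2:ℝ)..x, 1 / Real.log t

/-- `ψ_d(p) = Σ_{ord χ = d} χ(g mod p)`, the sum over the complex multiplicative
characters of `(ℤ/pℤ)^*` of order exactly `d`. -/
def psiSum (g : ℚ) (p d : ℕ) : ℂ :=
  ∑ᶠ χ ∈ {χ : MulChar (ZMod p) ℂ | orderOf χ = d}, χ (ratRed g p)

/-- The finset of odd primes `p ≤ x` with `ord_p(g) = 0` and `p ≡ 1 (mod t)`. -/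
def primesTo (g : ℚ) (t : ℕ) (x : ℝ) : Finset ℕ :=
  (Finset.range (⌊x⌋₊ + 1)).filter fun p => p.Prime ∧ Odd p ∧ OrdZero g p ∧ p ≡ 1 [MOD t]

/-- The `linear' contribution `L_{g,t}(x)`. -/
def Lgt (g : ℚ) (h t : ℕ) (x : ℝ) : ℂ :=
  (1 / (t : ℂ)) * ∑ p ∈ primesTo g t x, ∑ d ∈ (Nat.gcd h t).divisors, psiSum g p d

/-- The `quadratic' contribution `Q_{g,t}(x)`. -/
def Qgt (g : ℚ) (h t : ℕ) (x : ℝ) : ℂ :=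
  (1 / (t : ℂ)) * ∑ p ∈ primesTo g t x,
    ∑ d ∈ (Nat.gcd (2 * h) t).divisors.filter (fun d => ¬ d ∣ h), psiSum g p d

/-- `M_{g,t}(x) = L_{g,t}(x) + Q_{g,t}(x)`. -/
def Mgt (g : ℚ) (h t : ℕ) (x : ℝ) : ℂ := Lgt g h t x + Qgt g h t x

/-- The weight `w_{g,t}(p)` of Theorem 1 of the paper. -/
def wgt (g g₀ : ℚ) (h t p : ℕ) : ℚ :=
  let e := padicValNat 2 h
  let τ := padicValNat 2 t
  let ht := h / Nat.gcd h t
  let ε₁ : ℚ := if τ < e then 0 else if τ = e then -1 else 1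
  if 0 < g ∧ p ≡ 1 [MOD t] ∧ Nat.gcd ((p - 1) / t) ht = 1 then
    1 + ε₁ / 2 * (1 + (-1 : ℚ) ^ ((p - 1) / 2 ^ e)) * (jacobiSym (discQuad g₀) p : ℚ)
  else if g < 0 ∧ ¬ 2 ∣ ht ∧ p ≡ 1 [MOD Nat.lcm (2 ^ (e + 1)) t] ∧
      Nat.gcd ((p - 1) / t) ht = 1 then
    1 + ε₁ * (-1 : ℚ) ^ ((p - 1) / 2 ^ (e + 1)) * (jacobiSym (discQuad g₀) p : ℚ)
  else if g < 0 ∧ 2 ∣ ht ∧ p ≡ 1 [MOD 2 * t] ∧ Nat.gcd ((p - 1) / (2 * t)) ht = 1 then 2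
  else 0

/-- `G^m = {x^m : x ∈ G}`. -/
def powSet (G : Type*) [Monoid G] (m : ℕ) : Set G := Set.range fun x : G => x ^ m

/-- `ρ`: the density `|a·G^{2h} ∩ G^t| / |G^{2h}|` in a group `G` of order `n`
(and `0` if `t ∤ n`). -/
def rhoDen (G : Type*) [Group G] (n : ℕ) (a : G) (h t : ℕ) : ℚ :=
  if t ∣ n then
    (((a • powSet G (2 * h)) ∩ powSet G t).ncard : ℚ) / ((powSet G (2 * h)).ncard : ℚ)
  else 0

/-- `r_{g,t}(p) = t_h · ρ_{sgn g, (d(g₀)/p), t}`, computed with respect to the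
generator `γ` of `(ℤ/pℤ)^*`. -/
def rgt (g g₀ : ℚ) (h t p : ℕ) (γ : (ZMod p)ˣ) : ℚ :=
  (t / Nat.gcd t h : ℕ) *
    rhoDen (ZMod p)ˣ (p - 1)
      ((if 0 < g then 1 else -1) * (if jacobiSym (discQuad g₀) p = 1 then 1 else γ ^ h)) h t

/-- The coefficients of the Dedekind zeta function of `K`: the number of ideals of
the ring of integers of `K` of absolute norm `n`. -/
def zetaCoeff (K : Type*) [Field K] [NumberField K] (n : ℕ) : ℂ :=
  (Nat.card {I : Ideal (NumberField.RingOfIntegers K) // Ideal.absNorm I = n} : ℂ)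

/-- The Riemann Hypothesis for the Dedekind zeta function `ζ_K` of a number field `K`:
any analytic continuation of the Dirichlet series `Σ_I N(I)^{-s}` off `s = 1` has all
its zeros in the critical strip on the line `Re s = 1/2`. -/
def DedekindRH (K : Type*) [Field K] [NumberField K] : Prop :=
  ∀ Z : ℂ → ℂ, (∀ s : ℂ, s ≠ 1 → AnalyticAt ℂ Z s) →
    (∀ s : ℂ, 1 < s.re → Z s = LSeries (zetaCoeff K) s) →
    ∀ s : ℂ, 0 < s.re → s.re < 1 → Z s = 0 → s.re = 1 / 2

/-- The Ramanujan sum `c_d(m)`. -/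
def ramanujanSum (d m : ℕ) : ℂ :=
  ∑ k ∈ (Finset.Icc 1 d).filter (fun k => Nat.gcd k d = 1),
    Complex.exp (2 * Real.pi * Complex.I * k * m / d)

/-- The sum `Σ_{ord χ = d} χ(γ)` over the complex characters of `G` of order exactly `d`. -/
def charOrdSum {G : Type*} [Group G] (d : ℕ) (γ : G) : ℂ :=
  ∑ᶠ χ ∈ {χ : G →* ℂˣ | orderOf χ = d}, ((χ γ : ℂˣ) : ℂ)

end

/-- Every element of a finite cyclic group is a power, with exponent dividing the group order, of
some generator. The generator has to be adapted to the element: the residue of an exponent modulo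
the order is a unit times a divisor, and the unit is absorbed into the generator. -/
lemma exists_generator_pow_dvd {G : Type*} [Group G] [IsCyclic G] [Finite G] (γ : G) :
    ∃ (h : G) (m : ℕ), (∀ x, x ∈ Subgroup.zpowers h) ∧ m ∣ Nat.card G ∧ h ^ m = γ := by
  obtain ⟨g, hg⟩ := IsCyclic.exists_generator (α := G)
  have ho : orderOf g = Nat.card G := orderOf_eq_card_of_forall_mem_zpowers hg
  obtain ⟨a, rfl⟩ := mem_powers_iff_mem_zpowers.mpr (hg γ)
  have : NeZero (Nat.card G) := ⟨Nat.card_pos.ne'⟩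
  obtain ⟨m, hm, u, hu, hau⟩ := ZMod.eq_unit_mul_divisor (N := Nat.card G) (a : ZMod (Nat.card G))
  obtain ⟨u, rfl⟩ := hu
  refine ⟨g ^ (u : ZMod (Nat.card G)).val, m, ?_, hm, ?_⟩
  · have hc : orderOf (g ^ (u : ZMod (Nat.card G)).val) = Nat.card G := by
      rw [Nat.Coprime.orderOf_pow, ho]
      rw [ho]
      exact (ZMod.val_coe_unit_coprime u).symm
    intro x
    rw [Subgroup.eq_top_of_card_eq (Subgroup.zpowers (g ^ (u : ZMod (Nat.card G)).val))
      (by rw [Nat.card_zpowers, hc])]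
    trivial
  · simp only
    rw [← pow_mul, pow_eq_pow_iff_modEq, ho, ← ZMod.natCast_eq_natCast_iff, hau]
    simp

lemma index_zpowers_generator_pow {G : Type*} [Group G] [Finite G] {h : G}
    (hh : ∀ x, x ∈ Subgroup.zpowers h) {m : ℕ} (hm : m ∣ Nat.card G) :
    (Subgroup.zpowers (h ^ m)).index = m := by
  have ho : orderOf h = Nat.card G := orderOf_eq_card_of_forall_mem_zpowers hh
  have hm0 : m ≠ 0 := by
    rintro rfl
    exact Nat.card_pos.ne' (Nat.zero_dvd.mp hm)
  have h1 := (Subgroup.zpowers (h ^ m)).card_mul_index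
  rw [Nat.card_zpowers, orderOf_pow_of_dvd hm0 (ho ▸ hm), ho] at h1
  have h2 : Nat.card G / m * m = Nat.card G := Nat.div_mul_cancel hm
  have h3 : 0 < Nat.card G / m := Nat.pos_of_ne_zero fun h0 ↦ by
    rw [h0, zero_mul] at h2
    exact Nat.card_pos.ne h2
  exact Nat.eq_of_mul_eq_mul_left h3 (h1.trans h2.symm)

lemma bijOn_eval_generator {G : Type*} [Group G] {h : G}
    (hh : ∀ x, x ∈ Subgroup.zpowers h) {d : ℕ} (hd0 : 0 < d) (hd : d ∣ Nat.card G) :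
    Set.BijOn (fun χ : G →* ℂˣ ↦ ((χ h : ℂˣ) : ℂ)) {χ | orderOf χ = d}
      (primitiveRoots d ℂ : Set ℂ) := by
  have hord (χ : G →* ℂˣ) : orderOf χ = orderOf ((χ h : ℂˣ) : ℂ) := by
    rw [orderOf_units, orderOf_eq_orderOf_iff]
    intro j
    rw [MonoidHom.eq_iff_eq_on_generator hh, MonoidHom.pow_apply, MonoidHom.one_apply]
  refine ⟨fun χ hχ ↦ ?_, fun χ _ ψ _ hχψ ↦ ?_, fun ζ hζ ↦ ?_⟩
  · rw [Finset.mem_coe, mem_primitiveRoots hd0, IsPrimitiveRoot.iff_orderOf, ← hord]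
    exact hχ
  · exact (MonoidHom.eq_iff_eq_on_generator hh _ _).mpr (Units.ext hχψ)
  · rw [Finset.mem_coe, mem_primitiveRoots hd0] at hζ
    obtain ⟨u, rfl⟩ := hζ.isUnit hd0.ne'
    have hu : orderOf u ∣ orderOf h := by
      rw [orderOf_eq_card_of_forall_mem_zpowers hh, ← orderOf_units, ← hζ.eq_orderOf]
      exact hd
    have he : monoidHomOfForallMemZpowers hh hu h = u := monoidHomOfForallMemZpowers_apply_gen hh hu
    refine ⟨monoidHomOfForallMemZpowers hh hu, ?_, congrArg Units.val he⟩
    rw [Set.mem_ofPred_eq, hord, he, ← hζ.eq_orderOf]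

lemma ramanujanSum_eq_sum_primitiveRoots {d : ℕ} (hd0 : 0 < d) (m : ℕ) :
    ramanujanSum d m = ∑ ζ ∈ primitiveRoots d ℂ, ζ ^ m := by
  have hprim := Complex.isPrimitiveRoot_exp d hd0.ne'
  -- The index `k = d` is coprime to `d` only if `d = 1`.
  have hlt : ∀ k ∈ (Finset.Icc 1 d).filter (fun k ↦ Nat.gcd k d = 1), d = 1 ∧ k = 1 ∨ k < d := by
    intro k hk
    obtain ⟨hk, hg⟩ := Finset.mem_filter.mp hk
    rcases (Finset.mem_Icc.mp hk).2.eq_or_lt with rfl | h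
    · rw [Nat.gcd_self] at hg
      exact Or.inl ⟨hg, hg⟩
    · exact Or.inr h
  refine Finset.sum_bij (fun k _ ↦ Complex.exp (2 * Real.pi * Complex.I / d) ^ k)
    (fun k hk ↦ ?_) (fun k hk l hl hkl ↦ ?_) (fun ζ hζ ↦ ?_) (fun k _ ↦ ?_)
  · rw [mem_primitiveRoots hd0]
    exact hprim.pow_of_coprime k (Finset.mem_filter.mp hk).2
  · rcases hlt k hk with ⟨h1, hk1⟩ | hk' <;> rcases hlt l hl with ⟨h1', hl1⟩ | hl'
    · rw [hk1, hl1]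
    · have := (Finset.mem_Icc.mp (Finset.mem_filter.mp hl).1).1
      omega
    · have := (Finset.mem_Icc.mp (Finset.mem_filter.mp hk).1).1
      omega
    · exact hprim.pow_inj hk' hl' hkl
  · rw [mem_primitiveRoots hd0] at hζ
    have : NeZero d := ⟨hd0.ne'⟩
    obtain ⟨i, hi, hic, rfl⟩ := hprim.isPrimitiveRoot_iff.mp hζ
    rcases Nat.eq_zero_or_pos i with rfl | hi0
    -- The exponent `0` is coprime to `d` only if `d = 1`; it corresponds to the index `k = d`.
    · obtain rfl : d = 1 := by simpa using hic
      exact ⟨1, by simp, by simp⟩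
    · exact ⟨i, Finset.mem_filter.mpr ⟨Finset.mem_Icc.mpr ⟨hi0, hi.le⟩, hic⟩, rfl⟩
  · rw [← pow_mul, ← Complex.exp_nat_mul]
    congr 1
    push_cast
    ring

/-- the sum of the characters of order exactly `d` at `γ` equals the
Ramanujan sum `c_d([G : ⟨γ⟩])`. -/
theorem stmt4 {G : Type*} [Group G] [IsCyclic G] [Fintype G] (n d : ℕ)
    (hn : Fintype.card G = n) (hd : d ∣ n) (γ : G) :
    charOrdSum d γ = ramanujanSum d ((Subgroup.zpowers γ).index) := by
  subst hn
  rw [← Nat.card_eq_fintype_card] at hd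
  have hd0 : 0 < d := Nat.pos_of_dvd_of_pos hd Nat.card_pos
  obtain ⟨h, m, hh, hm, rfl⟩ := exists_generator_pow_dvd γ
  rw [index_zpowers_generator_pow hh hm, ramanujanSum_eq_sum_primitiveRoots hd0, charOrdSum,
    ← finsum_mem_coe_finset]
  exact finsum_mem_eq_of_bijOn _ (bijOn_eval_generator hh hd0 hd) fun χ _ ↦ by simp
end

section
/- Let p be an odd prime with ord_p(g) = 0, and put ε₂ = 0 if τ ≤ e and ε₂ = 1 if τ > e. (i) Assume p ≡ 1 (mod gcd(h,t)). If g > 0, then Σ_{d | gcd(h,t)} ψ_d(p) = gcd(h,t); if g < 0, then Σ_{d | gcd(h,t)} ψ_d(p) = gcd(h,t) when p ≡ 1 (mod 2·gcd(h,t)) and 0 otherwise. (ii) Assume p ≡ 1 (mod gcd(2h,t)). If g > 0, then Σ_{d | gcd(2h,t), d ∤ h} ψ_d(p) = ε₂ · (d(g₀)/p) · gcd(h,t); if g < 0, then Σ_{d | gcd(2h,t), d ∤ h} ψ_d(p) = ε₂ · (−1)^{(p−1)/2^{e+1}} · (d(g₀)/p) · gcd(h,t). -/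
/-! Write `n = gcd (h, t)`. For `m ∣ p - 1`, summing `ψ_d(p)` over `d ∣ m` sums `χ (g mod p)` over all
characters with `χ ^ m = 1`, so orthogonality (`sum_divisors_psiSum`) gives `m` if
`(g mod p) ^ ((p - 1) / m) = 1` and `0` otherwise. Part (i) is the case `m = n`: `g₀ ^ h` is an
`n`-th power, and `-1` is one exactly when `2n ∣ p - 1`.

For part (ii), the divisors of `gcd (2h, t)` that divide `h` are those of `n`, so the sum is a
difference of two such sums. If `τ ≤ e` the two moduli agree. If `τ > e` then `gcd (2h, t) = 2n`
with `h / n` odd, so `w = (g mod p) ^ ((p - 1) / 2n)` is a sign and the difference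
`2n · [w = 1] - n · [w ^ 2 = 1]` is `n · w`. By Euler's criterion `w` is the quadratic character of
`g₀ mod p`, times `(-1) ^ ((p - 1) / 2n)` when `g < 0`; this exponent has the parity of
`(p - 1) / 2 ^ (e + 1)` because `n / 2 ^ e` is odd.

Finally `(d(g₀) / p)` is the quadratic character of `g₀ mod p` (`jacobiSym_discQuad`): the order
`ℤ[√(num · den)]` has discriminant `4 · num · den`, which is `d(g₀)` times the square of an integer
(`exists_sq_mul_discr`) and is prime to `p`, so the exact value of `d(g₀)` is not needed.
-/


open Polynomial Filter
open scoped Classical Pointwise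

/-! ### Orthogonality of characters -/

/-- In a finite cyclic group of order `n * m` every `n`-torsion element is an `m`-th power. -/
lemma exists_pow_eq_of_pow_eq_one {G : Type*} [CommGroup G] [Finite G] [IsCyclic G] {n m : ℕ}
    (hn : 0 < n) (hG : Nat.card G = n * m) {x : G} (hx : x ^ n = 1) : ∃ y : G, y ^ m = x := by
  obtain ⟨γ, hγ⟩ := IsCyclic.exists_generator (α := G)
  obtain ⟨k, rfl⟩ := (mem_powers_iff_mem_zpowers (x := γ)).mpr (hγ x)
  simp only at hx
  rw [← pow_mul, ← orderOf_dvd_iff_pow_eq_one, orderOf_eq_card_of_forall_mem_zpowers hγ, hG,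
    mul_comm k] at hx
  obtain ⟨j, rfl⟩ := Nat.dvd_of_mul_dvd_mul_left hn hx
  exact ⟨γ ^ j, by simp only [← pow_mul, mul_comm]⟩

/-- Orthogonality for the characters killed by `n`: the values at `g mod p` sum to `n` when
`g mod p` is an `n`-th power (equivalently, when it is killed by `(p - 1) / n = m`), and cancel
otherwise. -/
lemma sum_divisors_psiSum {p : ℕ} [Fact p.Prime] {g : ℚ} (hg : ratRed g p ≠ 0) {n m : ℕ}
    (hn : 0 < n) (hnm : p - 1 = n * m) :
    ∑ d ∈ n.divisors, psiSum g p d = if ratRed g p ^ m = 1 then (n : ℂ) else 0 := by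
  obtain ⟨eqv⟩ := MulChar.mulEquiv_units (ZMod p) ℂ
  have hcyc : IsCyclic (MulChar (ZMod p) ℂ) :=
    isCyclic_of_surjective eqv.symm.toMonoidHom eqv.symm.surjective
  have hcard : Nat.card (MulChar (ZMod p) ℂ) = n * m := by
    rw [Nat.card_congr eqv.toEquiv, Nat.card_eq_fintype_card, ZMod.card_units, hnm]
  have hfin : Finite (MulChar (ZMod p) ℂ) := Finite.of_equiv _ eqv.symm.toEquiv
  have := Fintype.ofFinite (MulChar (ZMod p) ℂ)
  set u := ratRed g p with hu
  have hsum : ∑ d ∈ n.divisors, psiSum g p d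
      = ∑ χ ∈ Finset.univ.filter (fun χ : MulChar (ZMod p) ℂ => χ ^ n = 1), χ u := by
    rw [← Finset.sum_fiberwise_of_maps_to (t := n.divisors)
      (g := fun χ : MulChar (ZMod p) ℂ => orderOf χ)]
    · refine Finset.sum_congr rfl fun d hd => ?_
      rw [psiSum, finsum_mem_eq_finite_toFinset_sum _ (Set.toFinite _)]
      refine Finset.sum_congr ?_ fun _ _ => rfl
      ext χ
      have := Nat.dvd_of_mem_divisors hd
      simp only [Set.Finite.mem_toFinset, Set.mem_ofPred_eq, Finset.mem_filter, Finset.mem_univ,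
        true_and, iff_and_self]
      rintro rfl
      exact orderOf_dvd_iff_pow_eq_one.mp this
    · intro χ hχ
      simp only [Finset.mem_filter, Finset.mem_univ, true_and] at hχ
      exact Nat.mem_divisors.mpr ⟨orderOf_dvd_of_pow_eq_one hχ, hn.ne'⟩
  rw [hsum]
  split_ifs with h1
  · rw [Finset.sum_congr rfl (g := fun _ => (1 : ℂ))]
    · have hker := IsCyclic.card_powMonoidHom_ker (MulChar (ZMod p) ℂ) n
      rw [hcard, Nat.gcd_mul_right_left] at hker
      have hfilter : (Finset.univ.filter fun χ : MulChar (ZMod p) ℂ => χ ^ n = 1).card = n := by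
        rw [← Fintype.card_subtype, ← Nat.card_eq_fintype_card]
        exact hker
      rw [Finset.sum_const, hfilter, nsmul_one]
    · intro χ hχ
      simp only [Finset.mem_filter, Finset.mem_univ, true_and] at hχ
      obtain ⟨ψ, rfl⟩ := exists_pow_eq_of_pow_eq_one hn hcard hχ
      have hm : m ≠ 0 := by
        rintro rfl
        have := (Fact.out : p.Prime).two_le
        omega
      rw [MulChar.pow_apply' _ hm, ← map_pow, h1, map_one]
  · obtain ⟨ψ, hψ⟩ := MulChar.exists_apply_ne_one_of_hasEnoughRootsOfUnity (ZMod p) ℂ h1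
    have hψn : (ψ ^ m) ^ n = 1 := by
      rw [← pow_mul, mul_comm, ← hcard, pow_card_eq_one']
    have hψu : (ψ ^ m) u ≠ 1 := by
      lift u to (ZMod p)ˣ using hg.isUnit with v
      rwa [MulChar.pow_apply_coe, ← map_pow]
    -- multiplication by the character `ψ ^ m` permutes the `n`-torsion characters
    have hperm : (ψ ^ m) u *
        ∑ χ ∈ Finset.univ.filter (fun χ : MulChar (ZMod p) ℂ => χ ^ n = 1), χ u
        = ∑ χ ∈ Finset.univ.filter (fun χ : MulChar (ZMod p) ℂ => χ ^ n = 1), χ u := by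
      rw [Finset.mul_sum]
      refine Finset.sum_equiv (Equiv.mulLeft (ψ ^ m)) (fun χ => ?_) fun χ _ => rfl
      simp [mul_pow, hψn]
    by_contra h
    exact hψu ((mul_eq_right₀ h).mp hperm)

/-! ### Reduction modulo `p` -/

lemma ratRed_neg (g : ℚ) (p : ℕ) : ratRed (-g) p = -ratRed g p := by
  simp [ratRed]

lemma ratRed_pow (g : ℚ) (h p : ℕ) [Fact p.Prime] : ratRed (g ^ h) p = ratRed g p ^ h := by
  simp [ratRed, Rat.num_pow, Rat.den_pow, mul_pow]

lemma ratRed_ne_zero {g : ℚ} {p : ℕ} [Fact p.Prime] (h0 : OrdZero g p) : ratRed g p ≠ 0 := by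
  rw [ratRed, mul_ne_zero_iff, Ne, ZMod.intCast_zmod_eq_zero_iff_dvd, Ne, inv_eq_zero,
    ZMod.natCast_eq_zero_iff]
  exact h0

lemma OrdZero.of_decomp {g g₀ : ℚ} {h p : ℕ} (hd : Decomp g g₀ h) (h0 : OrdZero g p) :
    OrdZero g₀ p := by
  have hh : h ≠ 0 := (Nat.one_le_iff_ne_zero.mp hd.h_pos)
  unfold OrdZero at *
  rcases hd.eq with rfl | rfl
  · rw [Rat.num_pow, Rat.den_pow] at h0
    exact ⟨fun H => h0.1 (dvd_pow H hh), fun H => h0.2 (dvd_pow H hh)⟩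
  · rw [Rat.num_neg_eq_neg_num, Rat.den_neg_eq_den, Rat.num_pow, Rat.den_pow, dvd_neg] at h0
    exact ⟨fun H => h0.1 (dvd_pow H hh), fun H => h0.2 (dvd_pow H hh)⟩

/-! ### The discriminant of `ℚ(√g₀)` modulo `p` -/

open scoped NumberField in
/-- If a quadratic number field `K` is generated by a square root `s` of `g₀`, its discriminant
differs from `4 · num · den`, the discriminant of the order `ℤ[den · s]`, by the square of the
index of that order. -/
lemma exists_sq_mul_discr {K : Type*} [Field K] [NumberField K] {g₀ : ℚ}
    (hsq : ∀ b : ℚ, b ^ 2 ≠ g₀) (hrank : Module.finrank ℚ K = 2) {s : K}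
    (hs : s ^ 2 = (g₀ : K)) :
    ∃ k : ℤ, k ^ 2 * NumberField.discr K = 4 * (g₀.num * g₀.den) := by
  set a : ℤ := g₀.num * g₀.den with ha
  have hden : (g₀.den : ℚ) ≠ 0 := by exact_mod_cast g₀.den_nz
  have haq : (a : ℚ) = g₀ * g₀.den ^ 2 := by
    rw [ha]; push_cast
    rw [pow_two, ← mul_assoc, Rat.mul_den_eq_num]
  have hθ2 : ((g₀.den : K) * s) ^ 2 = (a : K) := by
    rw [mul_pow, hs]
    have := congrArg (Rat.cast : ℚ → K) haq
    push_cast at this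
    rw [this, mul_comm]
  have hint : IsIntegral ℤ ((g₀.den : K) * s) := by
    refine ⟨X ^ 2 - C a, monic_X_pow_sub_C a two_ne_zero, ?_⟩
    rw [eval₂_sub, eval₂_X_pow, eval₂_C, hθ2, eq_intCast, sub_self]
  set θ : 𝓞 K := ⟨_, hint⟩ with hθ
  have hθ2' : (θ : K) ^ 2 = (a : K) := hθ2
  have hθsq : θ * θ = (a : 𝓞 K) := by
    apply NumberField.RingOfIntegers.ext
    rw [← pow_two]
    push_cast; exact hθ2'
  have hmin : minpoly ℚ (θ : K) = X ^ 2 - C (a : ℚ) := by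
    refine (minpoly.eq_of_irreducible_of_monic ?_ ?_ (monic_X_pow_sub_C _ two_ne_zero)).symm
    · refine X_pow_sub_C_irreducible_of_prime Nat.prime_two fun b hb => hsq (b / g₀.den) ?_
      rw [div_pow, hb, haq]; field_simp
    · rw [map_sub, map_pow, aeval_X, aeval_C, hθ2', eq_ratCast, Rat.cast_intCast, sub_self]
  have htrθ : Algebra.trace ℤ (𝓞 K) θ = 0 := by
    have := Algebra.coe_trace_int θ
    rw [trace_eq_finrank_mul_minpoly_nextCoeff, hmin, nextCoeff, natDegree_X_pow_sub_C] at this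
    rw [coeff_sub, coeff_X_pow, coeff_C] at this
    norm_num at this
    exact this
  have hrankZ : Module.finrank ℤ (𝓞 K) = 2 := by
    rw [NumberField.RingOfIntegers.rank, hrank]
  have htrint (c : ℤ) :
      Algebra.trace ℤ (𝓞 K) c = 2 * c := by
    have := Algebra.trace_algebraMap (S := 𝓞 K) c
    simpa [hrankZ] using this
  let b := (NumberField.RingOfIntegers.basis K).reindex
    (Fintype.equivFinOfCardEq (n := 2) (by
      rw [← Module.finrank_eq_card_chooseBasisIndex, hrankZ]))
  let v : Fin 2 → 𝓞 K := ![1, θ]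
  have hdisc : Algebra.discr ℤ v = 4 * a := by
    rw [Algebra.discr_def, Matrix.det_fin_two]
    have h1 := htrint 1
    have h2 := htrint a
    push_cast at h1
    simp [v, Algebra.traceMatrix_apply, Algebra.traceForm_apply, hθsq, htrθ, h1, h2]
    ring
  refine ⟨(b.toMatrix v).det, ?_⟩
  rw [← hdisc, ← NumberField.discr_eq_discr _ b, ← Algebra.discr_of_matrix_vecMul,
    Module.Basis.toMatrix_map_vecMul]

lemma exists_sq_mul_discQuad {g₀ : ℚ} (hsq : ∀ b : ℚ, b ^ 2 ≠ g₀) :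
    ∃ k : ℤ, k ^ 2 * discQuad g₀ = 4 * (g₀.num * g₀.den) := by
  have hirr : Irreducible (X ^ 2 - C g₀) := X_pow_sub_C_irreducible_of_prime Nat.prime_two hsq
  have hprim : (primitiveRoots 2 ℚ).Nonempty :=
    ⟨-1, (mem_primitiveRoots two_pos).mpr (IsPrimitiveRoot.neg_one 0 (by norm_num))⟩
  have : IsSplittingField ℚ (quadField g₀) (X ^ 2 - C g₀) := by
    convert IsSplittingField.splittingField (X ^ 2 - C g₀)
    exact Subsingleton.elim _ _
  have hrank : Module.finrank ℚ (quadField g₀) = 2 :=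
    finrank_of_isSplittingField_X_pow_sub_C hprim hirr (quadField g₀)
  obtain ⟨s, hs⟩ := (SplittingField.splits (X ^ 2 - C g₀)).exists_eval_eq_zero (by
    rw [degree_map, degree_X_pow_sub_C two_pos]; norm_num)
  refine exists_sq_mul_discr hsq hrank (s := s) ?_
  simpa [sub_eq_zero] using hs

/-- Euler's criterion for `(d(g₀)/p)` in terms of `g₀` itself. -/
lemma jacobiSym_discQuad {g₀ : ℚ} (hsq : ∀ b : ℚ, b ^ 2 ≠ g₀) {p : ℕ} [hp : Fact p.Prime]
    (hodd : Odd p) (h0 : OrdZero g₀ p) :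
    ((jacobiSym (discQuad g₀) p : ℤ) : ZMod p) = ratRed g₀ p ^ (p / 2) ∧
      (jacobiSym (discQuad g₀) p = 1 ∨ jacobiSym (discQuad g₀) p = -1) := by
  obtain ⟨k, hk⟩ := exists_sq_mul_discQuad hsq
  have hk' := congrArg (Int.cast : ℤ → ZMod p) hk
  push_cast at hk'
  have hnum : (g₀.num : ZMod p) ≠ 0 := by
    rw [Ne, ZMod.intCast_zmod_eq_zero_iff_dvd]; exact h0.1
  have hden : (g₀.den : ZMod p) ≠ 0 := by
    rw [Ne, ZMod.natCast_eq_zero_iff]; exact h0.2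
  have h2 : (2 : ZMod p) ≠ 0 := by
    intro h
    have : ((2 : ℕ) : ZMod p) = 0 := by exact_mod_cast h
    rw [ZMod.natCast_eq_zero_iff] at this
    have h3 := (Nat.prime_dvd_prime_iff_eq hp.out Nat.prime_two).mp this
    subst h3
    exact absurd hodd (by decide)
  have h4 : (4 : ZMod p) = 2 ^ 2 := by norm_num
  have hne : (k : ZMod p) ^ 2 * (discQuad g₀ : ZMod p) ≠ 0 := by
    rw [hk', h4]
    exact mul_ne_zero (pow_ne_zero _ h2) (mul_ne_zero hnum hden)
  have hk0 : (k : ZMod p) ≠ 0 := by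
    intro h; simp [h] at hne
  have hd0 : (discQuad g₀ : ZMod p) ≠ 0 := right_ne_zero_of_mul hne
  rw [← jacobiSym.legendreSym.to_jacobiSym]
  refine ⟨?_, legendreSym.eq_one_or_neg_one p hd0⟩
  have hp2 : 2 * (p / 2) = p - 1 := by
    obtain ⟨r, rfl⟩ := hodd; omega
  have key {x : ZMod p} (hx : x ≠ 0) : (x ^ 2) ^ (p / 2) = 1 := by
    rw [← pow_mul, hp2, ZMod.pow_card_sub_one_eq_one hx]
  have e1 : ((k : ZMod p) ^ 2 * (discQuad g₀ : ZMod p)) ^ (p / 2)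
      = (discQuad g₀ : ZMod p) ^ (p / 2) := by rw [mul_pow, key hk0, one_mul]
  have e2 : ratRed g₀ p * (g₀.den : ZMod p) ^ 2 = g₀.num * g₀.den := by
    rw [ratRed]; field_simp
  rw [legendreSym.eq_pow, ← e1, hk', h4, mul_pow, key h2, one_mul, ← e2, mul_pow, key hden,
    mul_one]

/-! ### Divisors of `gcd (2h, t)` and evaluation of the sums -/

/-- A divisor of `gcd (2h, t)` divides `h` exactly when it divides `gcd (h, t)`. -/
lemma sum_filter_not_dvd (f : ℕ → ℂ) {h t : ℕ} (ht : 1 ≤ t) :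
    ∑ d ∈ (Nat.gcd (2 * h) t).divisors.filter (fun d => ¬ d ∣ h), f d
      = ∑ d ∈ (Nat.gcd (2 * h) t).divisors, f d - ∑ d ∈ (Nat.gcd h t).divisors, f d := by
  have hfilter : (Nat.gcd (2 * h) t).divisors.filter (fun d => d ∣ h)
      = (Nat.gcd h t).divisors := by
    have ht0 : t ≠ 0 := by omega
    ext d
    simp only [Finset.mem_filter, Nat.mem_divisors, Nat.dvd_gcd_iff, ne_eq, Nat.gcd_eq_zero_iff,
      ht0, and_false, not_false_eq_true, and_true]
    exact ⟨fun H => ⟨H.2, H.1.2⟩, fun H => ⟨⟨H.1.mul_left 2, H.2⟩, H.1⟩⟩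
  rw [← hfilter, eq_sub_iff_add_eq, add_comm, Finset.sum_filter_add_sum_filter_not]

/-- The 2-adic bookkeeping for `gcd (2h, t)`: it equals `gcd (h, t)` when `τ ≤ e`, and otherwise
it is twice as large, `h / gcd (h, t)` is odd, and `gcd (h, t)` is exactly divisible by `2 ^ e`. -/
lemma gcd_two_mul_cases {h t : ℕ} (hh : 1 ≤ h) (ht : 1 ≤ t) :
    (padicValNat 2 t ≤ padicValNat 2 h ∧ Nat.gcd (2 * h) t = Nat.gcd h t) ∨
    (¬ padicValNat 2 t ≤ padicValNat 2 h ∧ Nat.gcd (2 * h) t = 2 * Nat.gcd h t ∧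
      (∃ k, Odd k ∧ h = Nat.gcd h t * k) ∧
      ∃ c, Odd c ∧ Nat.gcd h t = 2 ^ padicValNat 2 h * c) := by
  obtain ⟨k, s, hcop, hk, hs⟩ := Nat.exists_coprime h t
  have hn : 0 < Nat.gcd h t := Nat.gcd_pos_of_pos_left t hh
  set n := Nat.gcd h t
  have hk0 : k ≠ 0 := by rintro rfl; omega
  have hs0 : s ≠ 0 := by rintro rfl; omega
  have hvh : padicValNat 2 h = padicValNat 2 k + padicValNat 2 n := by
    rw [hk, padicValNat.mul hk0 hn.ne']
  have hvt : padicValNat 2 t = padicValNat 2 s + padicValNat 2 n := by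
    rw [hs, padicValNat.mul hs0 hn.ne']
  have hgcd : Nat.gcd (2 * h) t = Nat.gcd 2 s * n := by
    rw [hk, hs, ← mul_assoc, Nat.gcd_mul_right, hcop.gcd_mul_right_cancel 2]
  by_cases h2 : 2 ∣ s
  · right
    have hkodd : ¬ 2 ∣ k := fun H => by
      have := Nat.dvd_gcd H h2
      rw [hcop] at this
      omega
    have hvk : padicValNat 2 k = 0 := padicValNat.eq_zero_of_not_dvd hkodd
    have hvs : 1 ≤ padicValNat 2 s := one_le_padicValNat_of_dvd hs0 h2
    refine ⟨by omega, by rw [hgcd, Nat.gcd_eq_left h2], ⟨k, ?_, by rw [hk, mul_comm]⟩, ?_⟩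
    · rw [← Nat.not_even_iff_odd, even_iff_two_dvd]; exact hkodd
    · rw [hvh, hvk, zero_add]
      obtain ⟨c, hc⟩ := pow_padicValNat_dvd (p := 2) (n := n)
      refine ⟨c, ?_, hc⟩
      rw [← Nat.not_even_iff_odd, even_iff_two_dvd]
      rintro ⟨b, rfl⟩
      refine pow_succ_padicValNat_not_dvd (p := 2) hn.ne' ⟨b, ?_⟩
      rw [pow_succ, mul_assoc]
      exact hc
  · left
    have hvs : padicValNat 2 s = 0 := padicValNat.eq_zero_of_not_dvd h2
    refine ⟨by omega, ?_⟩
    rw [hgcd, (Nat.prime_two.coprime_iff_not_dvd.mpr h2 : Nat.gcd 2 s = 1), one_mul]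

lemma exists_mul_of_modEq_one {p n : ℕ} (hp : 1 ≤ p) (h : p ≡ 1 [MOD n]) : ∃ m, p - 1 = n * m :=
  (Nat.modEq_iff_dvd' hp).mp h.symm

/-- When `τ > e`, the sum in part (ii) is `n` times the sign `w` by which `(g mod p)^((p-1)/2n)`
is given. -/
lemma sum_eq_of_sign {p : ℕ} [hp : Fact p.Prime] (hodd : Odd p) {g : ℚ} (hg : ratRed g p ≠ 0)
    {n r : ℕ} (hn : 0 < n) (hr : p - 1 = 2 * n * r) {w : ℤ} (hw : w = 1 ∨ w = -1)
    (hwr : ratRed g p ^ r = (w : ZMod p)) :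
    ∑ d ∈ (2 * n).divisors, psiSum g p d - ∑ d ∈ n.divisors, psiSum g p d = (w : ℂ) * n := by
  have hp3 : Fact (2 < p) := ⟨by
    obtain ⟨r, rfl⟩ := hodd
    have := hp.out.two_le
    omega⟩
  rw [sum_divisors_psiSum hg (by omega) hr,
    sum_divisors_psiSum hg hn (m := 2 * r) (by rw [hr]; ring), mul_comm 2 r, pow_mul, hwr]
  rcases hw with rfl | rfl
  · norm_num; ring
  · norm_num [ZMod.neg_one_ne_one]

/-- evaluation of the character sums `Σ ψ_d(p)` over `d ∣ gcd(h,t)`,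
respectively over `d ∣ gcd(2h,t)`, `d ∤ h`. -/
theorem stmt5 (g g₀ : ℚ) (h t : ℕ) (hd : Decomp g g₀ h) (ht : 1 ≤ t)
    (p : ℕ) (hp : p.Prime) (hodd : Odd p) (h0 : OrdZero g p) :
    (p ≡ 1 [MOD Nat.gcd h t] →
      ((0 < g → ∑ d ∈ (Nat.gcd h t).divisors, psiSum g p d = (Nat.gcd h t : ℂ)) ∧
       (g < 0 → ∑ d ∈ (Nat.gcd h t).divisors, psiSum g p d =
          if p ≡ 1 [MOD 2 * Nat.gcd h t] then (Nat.gcd h t : ℂ) else 0))) ∧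
    (p ≡ 1 [MOD Nat.gcd (2 * h) t] →
      ((0 < g →
          ∑ d ∈ (Nat.gcd (2 * h) t).divisors.filter (fun d => ¬ d ∣ h), psiSum g p d =
            (if padicValNat 2 t ≤ padicValNat 2 h then 0 else 1 : ℂ) *
              (jacobiSym (discQuad g₀) p : ℂ) * (Nat.gcd h t : ℂ)) ∧
       (g < 0 →
          ∑ d ∈ (Nat.gcd (2 * h) t).divisors.filter (fun d => ¬ d ∣ h), psiSum g p d =
            (if padicValNat 2 t ≤ padicValNat 2 h then 0 else 1 : ℂ) *
              (-1 : ℂ) ^ ((p - 1) / 2 ^ (padicValNat 2 h + 1)) *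
              (jacobiSym (discQuad g₀) p : ℂ) * (Nat.gcd h t : ℂ)))) := by
  have hpf : Fact p.Prime := ⟨hp⟩
  have hp3 : Fact (2 < p) := ⟨by
    obtain ⟨r, rfl⟩ := hodd
    have := hp.two_le
    omega⟩
  have hp1 : 1 ≤ p := hp.one_le
  have hh := hd.h_pos
  have h0' := OrdZero.of_decomp hd h0
  have hg := ratRed_ne_zero h0
  have hg₀ := ratRed_ne_zero h0'
  have hn : 0 < Nat.gcd h t := Nat.gcd_pos_of_pos_left t hh
  have hpow_pos : 0 < g₀ ^ h := pow_pos hd.g₀_pos h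
  have hpos (hgp : 0 < g) : ratRed g p = ratRed g₀ p ^ h := by
    rcases hd.eq with e | e
    · rw [e, ratRed_pow]
    · linarith
  have hneg (hgn : g < 0) : ratRed g p = -(ratRed g₀ p ^ h) := by
    rcases hd.eq with e | e
    · linarith
    · rw [e, ratRed_neg, ratRed_pow]
  -- an `h`-th power is killed by the exponent `(p - 1) / gcd (h, t)`
  have hkill {m : ℕ} (hm : p - 1 = Nat.gcd h t * m) : (ratRed g₀ p ^ h) ^ m = 1 := by
    obtain ⟨k, hk⟩ := Nat.gcd_dvd_left h t
    rw [← pow_mul, hk, mul_right_comm, ← hm, pow_mul, ZMod.pow_card_sub_one_eq_one hg₀, one_pow]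
  refine ⟨fun hmod => ?_, fun hmod => ?_⟩
  · obtain ⟨m, hm⟩ := exists_mul_of_modEq_one hp1 hmod
    rw [sum_divisors_psiSum hg hn hm]
    refine ⟨fun hgp => ?_, fun hgn => ?_⟩
    · rw [hpos hgp, hkill hm, if_pos rfl]
    · rw [hneg hgn, neg_pow, hkill hm, mul_one]
      refine if_congr ?_ rfl rfl
      have hiff : p ≡ 1 [MOD 2 * Nat.gcd h t] ↔ Even m := by
        rw [Nat.ModEq.comm, Nat.modEq_iff_dvd' hp1, hm, mul_comm 2,
          Nat.mul_dvd_mul_iff_left hn, even_iff_two_dvd]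
      rw [hiff, neg_one_pow_eq_one_iff_even ZMod.neg_one_ne_one]
  · have hsq (b : ℚ) : b ^ 2 ≠ g₀ := fun hb => hd.not_power ⟨b, 2, le_rfl, hb⟩
    obtain ⟨heuler, hsign⟩ := jacobiSym_discQuad hsq hodd h0'
    rw [sum_filter_not_dvd _ ht]
    rcases gcd_two_mul_cases hh ht with ⟨hle, hgcd⟩ | ⟨hlt, hgcd, ⟨k, hkodd, hk⟩, c, hcodd, hc⟩
    · simp [hle, hgcd]
    rw [hgcd] at hmod ⊢
    obtain ⟨r, hr⟩ := exists_mul_of_modEq_one hp1 hmod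
    set ℓ := jacobiSym (discQuad g₀) p
    have hroot : (ratRed g₀ p ^ h) ^ r = (ℓ : ZMod p) := by
      have hhalf : Nat.gcd h t * r = p / 2 := by
        obtain ⟨q, rfl⟩ := hodd
        rw [mul_assoc] at hr
        omega
      rw [← pow_mul, hk, mul_right_comm, hhalf, pow_mul, ← heuler]
      rcases hsign with e | e <;> simp [e, hkodd.neg_one_pow]
    simp only [hlt, if_false, one_mul]
    refine ⟨fun hgp => ?_, fun hgn => ?_⟩
    · exact sum_eq_of_sign hodd hg hn hr hsign (by rw [hpos hgp, hroot])
    · have hexp : (p - 1) / 2 ^ (padicValNat 2 h + 1) = c * r := by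
        refine Nat.div_eq_of_eq_mul_right (by positivity) ?_
        rw [hr]
        nth_rewrite 1 [hc]
        ring
      rw [hexp, pow_mul, hcodd.neg_one_pow,
        sum_eq_of_sign hodd hg hn hr (w := (-1) ^ r * ℓ) ?_ ?_]
      · push_cast; ring
      · rcases neg_one_pow_eq_or ℤ r with e | e <;> rcases hsign with e' | e' <;> simp [e, e']
      · rw [hneg hgn, neg_pow, hroot]
        push_cast; ring
end

section
/- Let ν be defined by [ℚ(ζ_t, g^{1/t}) : ℚ] = φ(t)·t_h/ν, where ℚ(ζ_t, g^{1/t}) denotes the splitting field of X^t − g over ℚ. If g > 0, then ν = 2 if t_h is even and d(g₀) | t, and ν = 1 otherwise. If g < 0, then: if t is odd, ν = 1; if t is even and t_h is odd, ν = 1/2; if t is even and t_h ≡ 2 (mod 4), then ν = 2 if d(g₀) ∤ t and d(g₀) | 2t, and ν = 1 otherwise; if t is even and 4 | t_h, then ν = 2 if d(g₀) | t and ν = 1 otherwise. -/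
/-!
All fields are realised inside `ℂ`. Let `ρ = g₀^{h/t} > 0`, let `ζ_n = exp(2πi/n)`, and let
`α = ρ`, `-ρ` or `ζ_{2t} ρ` be a root of `X ^ t - g`, according as `g > 0`, or `g < 0` with `t` odd,
or `g < 0` with `t` even. The splitting field is `ℚ(ζ_t)(α)`, and by Kummer theory its degree over
`ℚ(ζ_t)` is the least `n > 0` with `α ^ n ∈ ℚ(ζ_t)` (`finrank_splitField`,
`pow_mem_iff_finrank_dvd`).

A power `α ^ k ∈ ℚ(ζ_t)` puts `ρ ^ k` into `ℚ(ζ_{2t})`. As cyclotomic fields are abelian, a real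
radical in one of them has rational square (`sq_rat_of_real_mem_cyc`); since `g₀` is not an exact
power this gives `t_h ∣ 2 k` (`dvd_two_mul_of_pow_mem`). On the other hand `ρ ^ t_h` is rational.
So only a factor `2` is in doubt, and if `t_h = 2 U` it is decided by `ρ ^ U`, which is `√g₀` up to
a rational factor (`mul_pow_half_mem_iff`): the question becomes whether `√g₀`, or `ζ_{2t} √g₀` when
`α = ζ_{2t} ρ` and `U` is odd, lies in `ℚ(ζ_t)`. The former means `d(g₀) ∣ t`
(`sqrt_mem_cyc_iff`), and the latter means that `√g₀` lies in `ℚ(ζ_{2t})` but not in `ℚ(ζ_t)`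
(`zet_mul_mem_iff`).

That `√g₀ ∈ ℚ(ζ_n)` if and only if `d(g₀) ∣ n` rests on an explicit formula for the discriminant of
a quadratic field (`discr_quadratic`), on quadratic Gauss sums (`exists_sqrt_mem_cyc`), and on the
discriminant and the roots of unity of `ℚ(ζ_n)`.
-/

open Polynomial Filter
open scoped Classical Pointwise

open IntermediateField

/-! ### Cyclotomic subfields of `ℂ` -/

/-- The standard primitive `n`-th root of unity `exp(2πi/n)`. -/
noncomputable def zet (n : ℕ) : ℂ := Complex.exp (2 * Real.pi * Complex.I / n)

/-- The `n`-th cyclotomic field, as a subfield of `ℂ`. -/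
noncomputable def cyc (n : ℕ) : IntermediateField ℚ ℂ := IntermediateField.adjoin ℚ {zet n}

lemma zet_spec {n : ℕ} (hn : n ≠ 0) : IsPrimitiveRoot (zet n) n :=
  Complex.isPrimitiveRoot_exp n hn

lemma zet_mem (n : ℕ) : zet n ∈ cyc n := mem_adjoin_simple_self ℚ _

lemma zet_mul_pow (m : ℕ) {k : ℕ} (hk : k ≠ 0) : zet (m * k) ^ k = zet m := by
  rw [zet, zet, ← Complex.exp_nat_mul]
  congr 1
  have : (k : ℂ) ≠ 0 := by exact_mod_cast hk
  push_cast
  by_cases hm : (m : ℂ) = 0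
  · simp [hm]
  · field_simp

lemma zet_two_mul_sq (n : ℕ) : zet (2 * n) ^ 2 = zet n := by
  rw [mul_comm]; exact zet_mul_pow n two_ne_zero

instance cyc_isCyclotomic (n : ℕ) [NeZero n] : IsCyclotomicExtension {n} ℚ (cyc n) := by
  have hint : IsIntegral ℚ (zet n) :=
    ((zet_spec (NeZero.ne n)).isIntegral (NeZero.pos n)).tower_top
  have h := (zet_spec (NeZero.ne n)).adjoin_isCyclotomicExtension ℚ
  change IsCyclotomicExtension {n} ℚ (IntermediateField.adjoin ℚ {zet n}).toSubalgebra
  rw [adjoin_simple_toSubalgebra_of_isAlgebraic hint.isAlgebraic]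
  exact h

instance cyc_numberField (n : ℕ) [NeZero n] : NumberField (cyc n) :=
  IsCyclotomicExtension.numberField {n} ℚ _

lemma finrank_cyc {n : ℕ} (hn : n ≠ 0) : Module.finrank ℚ (cyc n) = n.totient := by
  have : NeZero n := ⟨hn⟩
  exact IsCyclotomicExtension.Rat.finrank n _

lemma cyc_mono {m n : ℕ} (hn : n ≠ 0) (h : m ∣ n) : cyc m ≤ cyc n := by
  obtain ⟨k, rfl⟩ := h
  rw [cyc, adjoin_simple_le_iff, ← zet_mul_pow m (right_ne_zero_of_mul hn)]
  exact pow_mem (zet_mem _) _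

lemma rootOfUnity_mem_cyc {n : ℕ} (hn : n ≠ 0) {z : ℂ} (hz : z ^ n = 1) : z ∈ cyc n := by
  have : NeZero n := ⟨hn⟩
  obtain ⟨i, -, rfl⟩ := (zet_spec hn).eq_pow_of_pow_eq_one hz
  exact pow_mem (zet_mem _) _

/-- The roots of unity in `ℚ(ζ_n)` are the `n`-th ones for even `n`, the `2n`-th ones for odd `n`. -/
lemma dvd_of_primitive_mem_cyc {n k : ℕ} (hn : n ≠ 0) (hk : k ≠ 0) {z : ℂ}
    (hz : IsPrimitiveRoot z k) (hmem : z ∈ cyc n) : k ∣ if Even n then n else 2 * n := by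
  have : NeZero n := ⟨hn⟩
  have : NeZero k := ⟨hk⟩
  rw [← IsCyclotomicExtension.Rat.torsionOrder_eq (n := n) (K := cyc n)]
  have hz' : IsPrimitiveRoot (⟨z, hmem⟩ : cyc n) k :=
    IsPrimitiveRoot.coe_submonoidClass_iff.mp hz
  exact NumberField.Units.dvd_torsionOrder_of_isPrimitiveRoot hz'

lemma zet_two_mul_not_mem {n : ℕ} (hn : n ≠ 0) (he : Even n) : zet (2 * n) ∉ cyc n := by
  intro h
  have := dvd_of_primitive_mem_cyc hn (by lia) (zet_spec (by lia)) h
  rw [if_pos he] at this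
  have := Nat.le_of_dvd (by lia) this
  lia

lemma I_mem_cyc {n : ℕ} (hn : n ≠ 0) (h : 4 ∣ n) : Complex.I ∈ cyc n := by
  refine cyc_mono hn h (rootOfUnity_mem_cyc (by norm_num) ?_)
  exact Complex.I_pow_four

lemma four_dvd_of_I_mem {n : ℕ} (hn : n ≠ 0) (h : Complex.I ∈ cyc n) : 4 ∣ n := by
  have h4 : IsPrimitiveRoot Complex.I 4 := by
    refine IsPrimitiveRoot.mk_of_lt _ (by norm_num) Complex.I_pow_four ?_
    intro l h0 h4
    interval_cases l <;> norm_num [Complex.ext_iff, pow_succ]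
  have := dvd_of_primitive_mem_cyc hn (by norm_num) h4 h
  split_ifs at this with he
  · exact this
  · rw [Nat.not_even_iff_odd] at he
    obtain ⟨k, rfl⟩ := he
    lia

/-- A real number in a cyclotomic field, some positive power of which is rational, has rational
square: the Galois group is abelian, so complex conjugation fixes each conjugate of it, which
hence differs from it by a sign only. -/
lemma sq_rat_of_real_mem_cyc {n : ℕ} (hn : n ≠ 0) {x : ℝ} (hx : (x : ℂ) ∈ cyc n) {t : ℕ}
    (ht : t ≠ 0) {q : ℚ} (hq : x ^ t = q) : ∃ r : ℚ, x ^ 2 = r := by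
  have : NeZero n := ⟨hn⟩
  have hab : IsAbelianGalois ℚ (cyc n) := IsCyclotomicExtension.isAbelianGalois {n} ℚ _
  let y : cyc n := ⟨x, hx⟩
  let c : Gal(ℂ/ℚ) := Complex.conjAe.restrictScalars ℚ
  let τ : Gal((cyc n)/ℚ) := c.restrictNormal (cyc n)
  have hτ : ∀ z : cyc n, ((τ z : cyc n) : ℂ) = (starRingEnd ℂ) (z : ℂ) := fun z =>
    AlgEquiv.restrictNormal_commutes c (cyc n) z
  have hτy : τ y = y := by
    apply Subtype.ext
    rw [hτ]
    exact Complex.conj_ofReal x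
  have hmem : y ^ 2 ∈ (⊥ : IntermediateField ℚ (cyc n)) := by
    rw [IsGalois.mem_bot_iff_fixed]
    intro σ
    have hcomm : τ (σ y) = σ y := by
      have : τ * σ = σ * τ := mul_comm' τ σ
      calc τ (σ y) = (τ * σ) y := rfl
        _ = (σ * τ) y := by rw [this]
        _ = σ y := by rw [AlgEquiv.mul_apply, hτy]
    have hreal : (starRingEnd ℂ) ((σ y : cyc n) : ℂ) = ((σ y : cyc n) : ℂ) := by
      rw [← hτ, hcomm]
    obtain ⟨u, hu⟩ := Complex.conj_eq_iff_real.1 hreal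
    have hyt : y ^ t = algebraMap ℚ (cyc n) q := by
      apply Subtype.ext
      change (x : ℂ) ^ t = _
      rw [← Complex.ofReal_pow, hq]
      simp
    -- the conjugate `u` is real with `u ^ t = x ^ t`, so `u = ±x`
    have hut : u ^ t = x ^ t := by
      have h1 : (σ y) ^ t = y ^ t := by rw [← map_pow, hyt, AlgEquiv.commutes]
      have h2 : ((σ y : cyc n) : ℂ) ^ t = (x : ℂ) ^ t := congrArg Subtype.val h1
      rw [hu] at h2
      exact_mod_cast h2
    have habs : |u| = |x| := by
      have : |u| ^ t = |x| ^ t := by rw [← abs_pow, ← abs_pow, hut]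
      exact (pow_left_inj₀ (abs_nonneg _) (abs_nonneg _) ht).1 this
    rw [map_pow]
    apply Subtype.ext
    change ((σ y : cyc n) : ℂ) ^ 2 = (x : ℂ) ^ 2
    rw [hu, ← Complex.ofReal_pow, ← Complex.ofReal_pow, ← sq_abs u, habs, sq_abs]
  obtain ⟨r, hr⟩ := IntermediateField.mem_bot.1 hmem
  refine ⟨r, ?_⟩
  have := congrArg Subtype.val hr
  have h3 : ((r : ℝ) : ℂ) = (x : ℂ) ^ 2 := by
    rw [← show ((y ^ 2 : cyc n) : ℂ) = (x : ℂ) ^ 2 from rfl, ← hr]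
    simp
  exact_mod_cast h3.symm

/-! ### Quadratic irrationalities in cyclotomic fields -/

/-- The quadratic Gauss sum: `√(p*)` lies in `ℚ(ζ_p)`, where `p* = ±p ≡ 1 mod 4`. -/
lemma exists_sqrt_mem_cyc_prime {p : ℕ} (hp : p.Prime) (hodd : Odd p) :
    ∃ ε : ℤ, (ε = 1 ∨ ε = -1) ∧ (ε * p) % 4 = 1 ∧ ∃ z ∈ cyc p, z ^ 2 = ε * p := by
  have : Fact p.Prime := ⟨hp⟩
  have hp2 : p ≠ 2 := by rintro rfl; exact absurd hodd (by decide)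
  have hchar : ringChar (ZMod p) ≠ 2 := by rwa [ZMod.ringChar_zmod_n]
  let χ : MulChar (ZMod p) ℂ := (quadraticChar (ZMod p)).ringHomComp (Int.castRingHom ℂ)
  have hχ1 : χ ≠ 1 :=
    (MulChar.ringHomComp_ne_one_iff (Int.castRingHom ℂ).injective_int).2 (quadraticChar_ne_one hchar)
  have hχ2 : χ.IsQuadratic := (quadraticChar_isQuadratic (ZMod p)).comp _
  have hψ := AddChar.zmodChar_primitive_of_primitive_root p (zet_spec hp.ne_zero)
  set ψ := AddChar.zmodChar p ((IsPrimitiveRoot.iff_def (zet p) p).mp (zet_spec hp.ne_zero)).left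
  have hsq := gaussSum_sq hχ1 hχ2 hψ
  have hε : χ (-1) = ((ZMod.χ₄ p : ℤ) : ℂ) := by
    change ((quadraticChar (ZMod p) (-1) : ℤ) : ℂ) = _
    rw [quadraticChar_neg_one hchar, ZMod.card]
  refine ⟨ZMod.χ₄ p, ?_, ?_, gaussSum χ ψ, ?_, ?_⟩
  · rcases Nat.odd_mod_four_iff.1 (Nat.odd_iff.1 hodd) with h | h
    · exact .inl (ZMod.χ₄_nat_one_mod_four h)
    · exact .inr (ZMod.χ₄_nat_three_mod_four h)
  · rcases Nat.odd_mod_four_iff.1 (Nat.odd_iff.1 hodd) with h | h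
    · rw [ZMod.χ₄_nat_one_mod_four h]; lia
    · rw [ZMod.χ₄_nat_three_mod_four h]; lia
  · refine sum_mem fun a _ => mul_mem ?_ ?_
    · exact intCast_mem _ (quadraticChar (ZMod p) a)
    · exact pow_mem (zet_mem p) _
  · rw [hsq, hε, ZMod.card]

/-- For odd `m`, a square root of `±m ≡ 1 mod 4` lies in `ℚ(ζ_m)`. -/
lemma exists_sqrt_mem_cyc {m : ℕ} (hodd : Odd m) :
    ∃ ε : ℤ, (ε = 1 ∨ ε = -1) ∧ (ε * m) % 4 = 1 ∧ ∃ z ∈ cyc m, z ^ 2 = ε * m := by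
  induction m using Nat.recOnMul with
  | zero => exact absurd hodd (by decide)
  | one => exact ⟨1, .inl rfl, rfl, 1, one_mem _, by simp⟩
  | prime p hp => exact exists_sqrt_mem_cyc_prime hp hodd
  | mul a b iha ihb =>
    obtain ⟨ha, hb⟩ := Nat.odd_mul.1 hodd
    obtain ⟨ε, h1, h2, z, hz, hz2⟩ := iha ha
    obtain ⟨δ, g1, g2, w, hw, hw2⟩ := ihb hb
    have hab : a * b ≠ 0 := hodd.pos.ne'
    refine ⟨ε * δ, by rcases h1 with rfl | rfl <;> rcases g1 with rfl | rfl <;> simp, ?_, z * w,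
      mul_mem (cyc_mono hab (dvd_mul_right a b) hz) (cyc_mono hab (dvd_mul_left b a) hw), ?_⟩
    · have : ε * δ * ((a * b : ℕ) : ℤ) = (ε * a) * (δ * b) := by push_cast; ring
      rw [this, Int.mul_emod, h2, g2]; rfl
    · rw [mul_pow, hz2, hw2]; push_cast; ring

lemma mem_of_sq_eq {K : IntermediateField ℚ ℂ} {z w : ℂ} (hz : z ∈ K) (h : z ^ 2 = w ^ 2) :
    w ∈ K := by
  rcases sq_eq_sq_iff_eq_or_eq_neg.1 h with rfl | rfl
  · exact hz
  · simpa using neg_mem hz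

lemma sqrt_two_mem_cyc {z : ℂ} (hz : z ^ 2 = 2) : z ∈ cyc 8 := by
  -- `√2 = ζ₈ + ζ₈⁻¹ = ζ₈ - ζ₈³`
  have h8 : zet 8 ^ 4 = -1 := by
    have h := (zet_spec (n := 8) (by norm_num))
    have h1 := h.pow_eq_one
    have h2 := h.pow_ne_one_of_pos_of_lt (l := 4) (by norm_num) (by norm_num)
    have : (zet 8 ^ 4 - 1) * (zet 8 ^ 4 + 1) = 0 := by linear_combination h1
    rcases mul_eq_zero.1 this with h | h
    · exact absurd (sub_eq_zero.1 h) h2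
    · exact eq_neg_of_add_eq_zero_left h
  refine mem_of_sq_eq (z := zet 8 - zet 8 ^ 3) (sub_mem (zet_mem _) (pow_mem (zet_mem _) _)) ?_
  rw [hz]
  linear_combination (-2 + zet 8 ^ 2) * h8

/-- `√±2` does not lie in a cyclotomic field `ℚ(ζ_n)` unless `8 ∣ n`. -/
lemma eight_dvd_of_sqrt_two_mem {n : ℕ} (hn : n ≠ 0) {z : ℂ}
    (hz : z ^ 2 = 2 ∨ z ^ 2 = -2) (hmem : z ∈ cyc n) : 8 ∣ n := by
  have hN : Nat.lcm 4 n ≠ 0 := Nat.lcm_ne_zero (by norm_num) hn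
  have h4 : 4 ∣ Nat.lcm 4 n := Nat.dvd_lcm_left _ _
  have hI := I_mem_cyc hN h4
  have hzN := cyc_mono hN (Nat.dvd_lcm_right 4 n) hmem
  -- after adjoining `i`, the sum `(1 + i) / √2` is a primitive eighth root of unity
  obtain ⟨w, hw, hw2⟩ : ∃ w ∈ cyc (Nat.lcm 4 n), w ^ 2 = 2 := by
    rcases hz with h | h
    · exact ⟨z, hzN, h⟩
    · exact ⟨Complex.I * z, mul_mem hI hzN, by rw [mul_pow, h, Complex.I_sq]; norm_num⟩
  have hprim : IsPrimitiveRoot ((1 + Complex.I) * w / 2) 8 := by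
    have h2 : ((1 + Complex.I) * w / 2) ^ 2 = Complex.I := by
      linear_combination ((1 + Complex.I) ^ 2 / 4) * hw2 + (1 / 2) * Complex.I_sq
    have h4 : ((1 + Complex.I) * w / 2) ^ 4 = -1 := by
      rw [show 4 = 2 * 2 from rfl, pow_mul, h2, Complex.I_sq]
    have hord : orderOf ((1 + Complex.I) * w / 2) = 2 ^ (2 + 1) := by
      apply orderOf_eq_prime_pow
      · rw [show 2 ^ 2 = 4 from rfl, h4]; norm_num
      · rw [show 2 ^ (2 + 1) = 4 * 2 from rfl, pow_mul, h4]; norm_num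
    exact IsPrimitiveRoot.iff_orderOf.2 hord
  have h8 : 8 ∣ Nat.lcm 4 n := by
    have := dvd_of_primitive_mem_cyc hN (by norm_num) hprim
      (div_mem (mul_mem (add_mem (one_mem _) hI) hw) (ofNat_mem _ 2))
    rwa [if_pos (even_iff_two_dvd.2 ((by norm_num : 2 ∣ 4).trans h4))] at this
  -- `lcm 4 n` is `n`, `2n` or `4n`, and in the last two cases it is not divisible by `8`
  by_cases hd : 4 ∣ n
  · rwa [Nat.lcm_eq_right hd] at h8
  · exfalso
    have hg : Nat.lcm 4 n ∣ 4 * (n / Nat.gcd 4 n) := by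
      rw [Nat.lcm, Nat.mul_div_assoc _ (Nat.gcd_dvd_right _ _)]
    obtain ⟨k, hk⟩ := h8.trans hg
    have hmod : n = Nat.gcd 4 n * (n / Nat.gcd 4 n) :=
      (Nat.mul_div_cancel' (Nat.gcd_dvd_right _ _)).symm
    have h2 : n / Nat.gcd 4 n = 2 * k := by lia
    rw [h2] at hmod
    have h2n : 2 ∣ n := ⟨Nat.gcd 4 n * k, by rw [hmod]; grind⟩
    obtain ⟨j, hj⟩ : 2 ∣ Nat.gcd 4 n := Nat.dvd_gcd (by norm_num) h2n
    exact hd ⟨j * k, by rw [hmod, hj]; ring⟩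

/-! ### Discriminants of quadratic fields -/

lemma rat_int_of_squarefree_mul_sq {D : ℤ} (hD : Squarefree D) {r : ℚ} {M : ℤ}
    (h : (D : ℚ) * r ^ 2 = M) : ∃ b : ℤ, r = b := by
  have hden : (r.den : ℚ) ≠ 0 := by exact_mod_cast r.den_nz
  have h1 : D * r.num ^ 2 = M * (r.den : ℤ) ^ 2 := by
    have : (D : ℚ) * (r.num : ℚ) ^ 2 = M * (r.den : ℚ) ^ 2 := by
      rw [← h]
      nth_rewrite 2 [← Rat.num_div_den r]
      field_simp
    exact_mod_cast this
  have hcop : IsCoprime ((r.den : ℤ) ^ 2) (r.num ^ 2) :=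
    (Int.isCoprime_iff_gcd_eq_one.2 (by
      rw [Int.gcd_comm]; simpa [Int.gcd] using r.reduced)).pow
  have h2 : (r.den : ℤ) ^ 2 ∣ D :=
    hcop.dvd_of_dvd_mul_right (h1 ▸ dvd_mul_left _ _)
  have h3 : IsUnit (r.den : ℤ) := hD _ (by rwa [← sq])
  have h4 : r.den = 1 := by
    have := Int.isUnit_iff.1 h3
    lia
  exact ⟨r.num, (Rat.den_eq_one_iff r).1 h4 |>.symm⟩

section quad

variable {K : Type*} [Field K] [NumberField K]

/-- The discriminant of a quadratic field with integral basis `1, ω`, where `ω ^ 2 = u ω + v`. The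
hypothesis `hint` says that `1, ω` generate the ring of integers. -/
lemma discr_of_integral_basis (hfr : Module.finrank ℚ K = 2) {ω : K} {u v : ℤ}
    (hω : ω ^ 2 = u * ω + v) (hirr : ∀ q : ℚ, algebraMap ℚ K q ≠ ω)
    (hint : ∀ p q : ℚ, IsIntegral ℤ (algebraMap ℚ K p + algebraMap ℚ K q * ω) →
      (∃ a : ℤ, p = a) ∧ ∃ b : ℤ, q = b) :
    NumberField.discr K = u ^ 2 + 4 * v := by
  have hli : LinearIndependent ℚ ![(1 : K), ω] := by
    rw [LinearIndependent.pair_iff]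
    intro p q h
    by_cases hq : q = 0
    · subst hq
      simpa using h
    · exfalso
      refine hirr (-p / q) ?_
      have hq' : algebraMap ℚ K q ≠ 0 := by simpa using hq
      rw [Algebra.smul_def, Algebra.smul_def, mul_one] at h
      rw [map_div₀, map_neg, div_eq_iff hq']
      linear_combination -h
  let b : Module.Basis (Fin 2) ℚ K := basisOfLinearIndependentOfCardEqFinrank hli (by simp [hfr])
  have hb : ⇑b = ![(1 : K), ω] := coe_basisOfLinearIndependentOfCardEqFinrank hli _
  have hb0 : b 0 = 1 := by rw [hb]; rfl
  have hb1 : b 1 = ω := by rw [hb]; rfl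
  have hωint : IsIntegral ℤ ω := by
    refine ⟨X ^ 2 - C u * X - C v, ?_, ?_⟩
    · monicity!
    · simp only [eval₂_sub, eval₂_mul, eval₂_pow, eval₂_X, eval₂_C, hω]
      simp
  have hrepr : ∀ x : K, x = algebraMap ℚ K (b.repr x 0) + algebraMap ℚ K (b.repr x 1) * ω := by
    intro x
    conv_lhs => rw [← b.sum_repr x]
    rw [Fin.sum_univ_two, hb0, hb1, Algebra.smul_def, Algebra.smul_def, mul_one]
  have hdisc : Algebra.discr ℚ (NumberField.integralBasis K) = Algebra.discr ℚ b := by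
    convert Algebra.discr_eq_discr_of_toMatrix_coeff_isIntegral (K := K)
      (b := NumberField.integralBasis K) (b' := b) ?_ ?_
    · intro i j
      rw [Module.Basis.toMatrix_apply]
      have hbj : IsIntegral ℤ (b j) := by
        fin_cases j
        · change IsIntegral ℤ (b 0)
          rw [hb0]; exact isIntegral_one
        · change IsIntegral ℤ (b 1)
          rw [hb1]; exact hωint
      have := NumberField.integralBasis_repr_apply K (⟨b j, hbj⟩ : NumberField.RingOfIntegers K) i
      change (NumberField.integralBasis K).repr (b j) i = _ at this
      rw [this]
      exact isIntegral_algebraMap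
    · intro i j
      rw [Module.Basis.toMatrix_apply]
      have hj : IsIntegral ℤ (NumberField.integralBasis K j) := by
        rw [NumberField.integralBasis_apply]
        exact (NumberField.RingOfIntegers.basis K j).isIntegral_coe
      rw [hrepr (NumberField.integralBasis K j)] at hj
      obtain ⟨⟨a, ha⟩, ⟨c, hc⟩⟩ := hint _ _ hj
      fin_cases i
      · change IsIntegral ℤ ((b.repr (NumberField.integralBasis K j)) 0)
        rw [ha]; exact isIntegral_algebraMap (R := ℤ) (A := ℚ) (x := a)
      · change IsIntegral ℤ ((b.repr (NumberField.integralBasis K j)) 1)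
        rw [hc]; exact isIntegral_algebraMap (R := ℤ) (A := ℚ) (x := c)
  have hcoe : ∀ n : ℤ, (n : K) = algebraMap ℚ K n := fun n => by simp
  have htr1 : ∀ q : ℚ, Algebra.trace ℚ K (algebraMap ℚ K q) = 2 * q := by
    intro q
    rw [Algebra.trace_algebraMap, hfr]; simp
  have hω2 : ω * ω = (v : ℚ) • b 0 + (u : ℚ) • b 1 := by
    rw [hb0, hb1, ← sq, hω, Algebra.smul_def, Algebra.smul_def]; simp [add_comm]
  have htrω : Algebra.trace ℚ K ω = u := by
    rw [Algebra.trace_eq_matrix_trace b, Matrix.trace_fin_two, Algebra.leftMulMatrix_eq_repr_mul,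
      Algebra.leftMulMatrix_eq_repr_mul, hb0, hb1, hω2, mul_one, ← hb1]
    simp
  have htrω2 : Algebra.trace ℚ K (ω * ω) = u ^ 2 + 2 * v := by
    rw [hω2, map_add, map_smul, map_smul, hb0, hb1, htrω, ← map_one (algebraMap ℚ K), htr1]
    simp only [smul_eq_mul]; ring
  have htrone : Algebra.trace ℚ K 1 = 2 := by
    rw [← map_one (algebraMap ℚ K), htr1]; ring
  have hfin : (NumberField.discr K : ℚ) = u ^ 2 + 4 * v := by
    rw [NumberField.coe_discr, hdisc, Algebra.discr_def, Matrix.det_fin_two]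
    simp only [Algebra.traceMatrix_apply, Algebra.traceForm_apply, hb0, hb1, one_mul, mul_one,
      htrω, htrω2, htrone]
    ring
  exact_mod_cast hfin

/-- An algebraic integer `p + q √D` in a quadratic field has integral trace `2 p` and norm
`p ^ 2 - D q ^ 2`; as `D` is squarefree, `2 q` is integral as well. -/
lemma coeffs_of_isIntegral {D : ℤ} (hD : Squarefree D) {s : K} (hs : s ^ 2 = D)
    (hirr : ∀ q : ℚ, algebraMap ℚ K q ≠ s) {p q : ℚ}
    (hint : IsIntegral ℤ (algebraMap ℚ K p + algebraMap ℚ K q * s)) :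
    ∃ A B : ℤ, 2 * p = A ∧ 2 * q = B ∧ 4 ∣ A ^ 2 - D * B ^ 2 := by
  set x := algebraMap ℚ K p + algebraMap ℚ K q * s with hx
  by_cases hq : q = 0
  · have hxp : x = algebraMap ℚ K p := by simp [hx, hq]
    rw [hxp] at hint
    have h2 : IsIntegral ℤ p := (isIntegral_algebraMap_iff (algebraMap ℚ K).injective).1 hint
    obtain ⟨a, ha⟩ := IsIntegrallyClosed.isIntegral_iff.1 h2
    refine ⟨2 * a, 0, ?_, by simp [hq], ⟨a ^ 2, by ring⟩⟩
    rw [← ha]; simp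
  · have hxirr : x ∉ (algebraMap ℚ K).range := by
      rintro ⟨r, hr⟩
      apply hirr ((r - p) / q)
      have hq' : algebraMap ℚ K q ≠ 0 := by simpa using hq
      rw [map_div₀, map_sub, div_eq_iff hq', hr, hx]
      ring
    have hxint : IsIntegral ℚ x := hint.tower_top
    have hdeg := (minpoly.two_le_natDegree_iff hxint).2 hxirr
    obtain ⟨c, hc⟩ : ∃ c, c = p ^ 2 - D * q ^ 2 := ⟨_, rfl⟩
    obtain ⟨a, ha⟩ : ∃ a, a = 2 * p := ⟨_, rfl⟩
    let P : ℚ[X] := X ^ 2 - C a * X + C c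
    have hPmonic : P.Monic := by simp only [P]; monicity!
    have hPdeg : P.natDegree = 2 := by simp only [P]; compute_degree!
    have hroot : aeval x P = 0 := by
      have hDK : (D : K) = algebraMap ℚ K D := by simp
      simp only [P, map_add, map_sub, map_mul, map_pow, aeval_X, aeval_C, hx, ha, hc]
      rw [← hDK, ← hs, map_ofNat]
      ring
    have hmin : minpoly ℚ x = P := Eq.symm (eq_of_monic_of_dvd_of_natDegree_le
      (minpoly.monic hxint) hPmonic (minpoly.dvd ℚ x hroot) (by rw [hPdeg]; exact hdeg))
    have hZ : P = (minpoly ℤ x).map (algebraMap ℤ ℚ) := by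
      rw [← hmin]; exact minpoly.isIntegrallyClosed_eq_field_fractions' ℚ hint
    have h0 : p ^ 2 - D * q ^ 2 = ((minpoly ℤ x).coeff 0 : ℚ) := by
      rw [← hc]
      have := congrArg (fun f => coeff f 0) hZ
      simpa [P, coeff_map] using this
    have h1 : -(2 * p) = ((minpoly ℤ x).coeff 1 : ℚ) := by
      rw [← ha]
      have := congrArg (fun f => coeff f 1) hZ
      simpa [P, coeff_map, coeff_X_pow, coeff_C] using this
    set N := (minpoly ℤ x).coeff 0
    set T := (minpoly ℤ x).coeff 1
    obtain ⟨B, hB⟩ := rat_int_of_squarefree_mul_sq hD (r := 2 * q) (M := T ^ 2 - 4 * N) (by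
      push_cast; rw [← h0, ← h1]; ring)
    refine ⟨-T, B, by push_cast; rw [← h1]; ring, hB, ⟨N, ?_⟩⟩
    have : ((-T : ℤ) : ℚ) ^ 2 - D * (B : ℚ) ^ 2 = 4 * N := by
      push_cast; rw [← hB, ← h0, ← h1]; ring
    exact_mod_cast this

/-- The discriminant of `ℚ(√D)` for squarefree `D`. -/
lemma discr_quadratic (hfr : Module.finrank ℚ K = 2) {D : ℤ} (hD : Squarefree D) {s : K}
    (hs : s ^ 2 = D) (hirr : ∀ q : ℚ, algebraMap ℚ K q ≠ s) :
    NumberField.discr K = if D % 4 = 1 then D else 4 * D := by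
  have hD4 : D % 4 ≠ 0 := by
    intro h
    have : IsUnit (2 : ℤ) := hD 2 (by norm_num; lia)
    exact absurd (Int.isUnit_iff.1 this) (by norm_num)
  have hmod : ∀ A B : ℤ, 4 ∣ A ^ 2 - D * B ^ 2 →
      (A ^ 2 - D * B ^ 2) % 4 = 0 := fun A B h => Int.emod_eq_zero_of_dvd h
  split_ifs with h1
  · -- the integral basis is `1, (1 + √D) / 2`
    obtain ⟨k, hk⟩ : ∃ k, D = 4 * k + 1 := ⟨D / 4, by lia⟩
    have h2K : (2 : K) ≠ 0 := two_ne_zero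
    rw [discr_of_integral_basis hfr (ω := (1 + s) / 2) (u := 1) (v := k)]
    · lia
    · have : s ^ 2 = 4 * k + 1 := by rw [hs, hk]; push_cast; ring
      field_simp
      push_cast
      linear_combination this
    · intro q hq
      apply hirr (2 * q - 1)
      rw [map_sub, map_mul, hq, map_one, map_ofNat]
      field_simp; ring
    · intro p q hint
      have heq : algebraMap ℚ K p + algebraMap ℚ K q * ((1 + s) / 2) =
          algebraMap ℚ K (p + q / 2) + algebraMap ℚ K (q / 2) * s := by
        rw [map_add, map_div₀, map_ofNat]; field_simp; ring
      rw [heq] at hint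
      obtain ⟨A, B, hA, hB, hAB⟩ := coeffs_of_isIntegral hD hs hirr hint
      have hpar : ∃ c, A = B + 2 * c := by
        refine ⟨(A - B) / 2, ?_⟩
        rcases Int.even_or_odd' A with ⟨a, rfl | rfl⟩ <;>
          rcases Int.even_or_odd' B with ⟨c, rfl | rfl⟩
        · lia
        · exfalso; obtain ⟨m, hm⟩ := hAB; rw [hk] at hm; ring_nf at hm; lia
        · exfalso; obtain ⟨m, hm⟩ := hAB; rw [hk] at hm; ring_nf at hm; lia
        · lia
      obtain ⟨c, rfl⟩ := hpar
      refine ⟨⟨c, ?_⟩, B, by linarith⟩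
      push_cast at hA
      linarith
  · -- the integral basis is `1, √D`
    rw [discr_of_integral_basis hfr (ω := s) (u := 0) (v := D)]
    · ring
    · simp [hs]
    · exact hirr
    · intro p q hint
      obtain ⟨A, B, hA, hB, hAB⟩ := coeffs_of_isIntegral hD hs hirr hint
      have hpar : (∃ a, A = 2 * a) ∧ ∃ b, B = 2 * b := by
        obtain ⟨k, hk⟩ : ∃ k, D = 4 * k + 2 ∨ D = 4 * k + 3 := ⟨D / 4, by lia⟩
        obtain ⟨m, hm⟩ := hAB
        rcases Int.even_or_odd' A with ⟨a, rfl | rfl⟩ <;>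
          rcases Int.even_or_odd' B with ⟨c, rfl | rfl⟩
        · exact ⟨⟨a, rfl⟩, c, rfl⟩
        all_goals exfalso; rcases hk with hk | hk <;> rw [hk] at hm <;> ring_nf at hm <;> lia
      obtain ⟨⟨a, rfl⟩, b, rfl⟩ := hpar
      push_cast at hA hB
      exact ⟨⟨a, by linarith⟩, b, by linarith⟩

end quad

/-! ### Conductors of real quadratic fields -/

lemma exists_squarefree_part {g₀ : ℚ} (hpos : 0 < g₀) :
    ∃ (D : ℕ) (r : ℚ), Squarefree D ∧ 0 < r ∧ g₀ = D * r ^ 2 := by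
  obtain ⟨a, b, hab, ha⟩ := Nat.sq_mul_squarefree (g₀.num.toNat * g₀.den)
  have hnum : 0 < g₀.num := Rat.num_pos.2 hpos
  have hden : (g₀.den : ℚ) ≠ 0 := by exact_mod_cast g₀.den_nz
  have hb : b ≠ 0 := by
    rintro rfl
    have : g₀.num.toNat * g₀.den ≠ 0 := mul_ne_zero (by lia) g₀.den_nz
    exact this (by simpa using hab.symm)
  refine ⟨a, b / g₀.den, ha, by have := g₀.den_pos; positivity, ?_⟩
  have h1 : (b : ℚ) ^ 2 * a = g₀.num * g₀.den := by
    have : ((g₀.num.toNat : ℤ) : ℚ) = g₀.num := by rw [Int.toNat_of_nonneg hnum.le]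
    rw [← this]
    exact_mod_cast hab
  nth_rewrite 1 [← Rat.num_div_den g₀]
  field_simp
  linear_combination -h1

lemma discQuad_eq {g₀ : ℚ} {D : ℕ} {r : ℚ} (hD : Squarefree D) (hr : r ≠ 0)
    (hg : g₀ = D * r ^ 2) (hns : ∀ q : ℚ, q ^ 2 ≠ g₀) :
    discQuad g₀ = if D % 4 = 1 then (D : ℤ) else 4 * D := by
  have hirr : Irreducible (X ^ 2 - C g₀ : ℚ[X]) := X_pow_sub_C_irreducible_of_prime Nat.prime_two hns
  have hsplit := SplittingField.splits (X ^ 2 - C g₀ : ℚ[X])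
  obtain ⟨y, hy⟩ : ∃ y : quadField g₀, y ^ 2 = algebraMap ℚ _ g₀ := by
    obtain ⟨y, hy⟩ := hsplit.exists_eval_eq_zero (by
      rw [degree_map, degree_X_pow_sub_C two_pos]; norm_num)
    refine ⟨y, ?_⟩
    simpa [sub_eq_zero] using hy
  have hyirr : ∀ q : ℚ, algebraMap ℚ _ q ≠ y := by
    rintro q rfl
    exact hns q ((algebraMap ℚ (quadField g₀)).injective (by rw [map_pow, hy]))
  have hfr : Module.finrank ℚ (quadField g₀) = 2 := by
    have htop : ℚ⟮y⟯ = ⊤ := by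
      rw [← top_le_iff, ← IntermediateField.toSubalgebra_le_toSubalgebra,
        IntermediateField.top_toSubalgebra]
      refine (SplittingField.adjoin_rootSet (X ^ 2 - C g₀)).ge.trans (Algebra.adjoin_le ?_)
      intro z hz
      have hz2 : z ^ 2 = y ^ 2 := by
        rw [mem_rootSet] at hz
        rw [hy]
        simpa [sub_eq_zero] using hz.2
      rcases sq_eq_sq_iff_eq_or_eq_neg.1 hz2 with rfl | rfl
      · exact mem_adjoin_simple_self ℚ _
      · exact neg_mem (mem_adjoin_simple_self ℚ y)
    have hmin : minpoly ℚ y = X ^ 2 - C g₀ :=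
      (minpoly.eq_of_irreducible_of_monic hirr (by simp [hy]) (monic_X_pow_sub_C _ two_ne_zero)).symm
    rw [← IntermediateField.finrank_top', ← htop,
      IntermediateField.adjoin.finrank (Algebra.IsIntegral.isIntegral y), hmin,
      natDegree_X_pow_sub_C]
  have hrK : algebraMap ℚ (quadField g₀) r ≠ 0 := by simpa using hr
  have := discr_quadratic hfr (D := D) (s := y / algebraMap ℚ _ r) (Int.squarefree_natCast.2 hD)
    (by
      rw [div_pow, hy, div_eq_iff (pow_ne_zero 2 hrK), ← map_pow,
        show algebraMap ℚ (quadField g₀) g₀ = algebraMap ℚ _ (D * r ^ 2) from congrArg _ hg, map_mul]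
      simp)
    (by
      intro q hq
      apply hyirr (q * r)
      rw [map_mul, hq]; field_simp)
  rw [discQuad, this]
  have : ((D : ℤ) % 4 = 1) ↔ (D % 4 = 1) := by lia
  simp only [this]

/-- If `√D ∈ ℚ(ζ_n)` with `D` squarefree, then `D ∣ n`: the discriminant of `ℚ(√D)`, a multiple
of `D`, divides that of `ℚ(ζ_n)`, whose prime factors all divide `n`. -/
lemma squarefree_dvd_of_sqrt_mem {g₀ : ℚ} {D : ℕ} {r : ℚ} (hD : Squarefree D) (hr : r ≠ 0)
    (hg : g₀ = D * r ^ 2) (hns : ∀ q : ℚ, q ^ 2 ≠ g₀) {n : ℕ} (hn : n ≠ 0) {s : ℂ}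
    (hs : s ^ 2 = D) (hmem : s ∈ cyc n) : D ∣ n := by
  have : NeZero n := ⟨hn⟩
  have hsplit : ((X ^ 2 - C g₀ : ℚ[X]).map (algebraMap ℚ (cyc n))).Splits := by
    have hc : (algebraMap ℚ (cyc n) g₀) = (⟨s, hmem⟩ * algebraMap ℚ (cyc n) r) ^ 2 := by
      rw [hg, map_mul, mul_pow, map_pow]
      congr 1
      apply Subtype.ext
      simp [hs]
    have : (X ^ 2 - C g₀ : ℚ[X]).map (algebraMap ℚ (cyc n)) =
        (X + C (⟨s, hmem⟩ * algebraMap ℚ (cyc n) r)) *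
          (X - C (⟨s, hmem⟩ * algebraMap ℚ (cyc n) r)) := by
      rw [Polynomial.map_sub, Polynomial.map_pow, map_X, map_C, hc, C_pow]
      ring
    rw [this]
    exact (Splits.X_add_C _).mul (Splits.X_sub_C _)
  let : Algebra (quadField g₀) (cyc n) := (SplittingField.lift _ hsplit).toRingHom.toAlgebra
  have h1 := Int.natAbs_dvd_natAbs.2 (NumberField.discr_dvd_discr (quadField g₀) (cyc n))
  rw [IsCyclotomicExtension.Rat.natAbs_discr n (cyc n)] at h1
  have h2 := h1.trans (Nat.div_dvd_of_dvd (Nat.prod_primeFactors_pow_totient_ediv_dvd (NeZero.pos n)))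
  have h3 : D ∣ (NumberField.discr (quadField g₀)).natAbs := by
    change D ∣ (discQuad g₀).natAbs
    rw [discQuad_eq hD hr hg hns, ← Int.natCast_dvd]
    split_ifs
    · exact dvd_rfl
    · exact dvd_mul_left _ _
  exact (hD.dvd_pow_iff_dvd (Nat.totient_pos.2 (NeZero.pos n)).ne').1 (h3.trans h2)

/-- The conductor of a real quadratic field is its discriminant. The odd part of the discriminant
is handled by Gauss sums and ramification; the exact power of `2` is read off from the roots of
unity `i` and `ζ₈`, one of which is produced by dividing `√g₀` by a Gauss sum. -/
lemma sqrt_mem_cyc_iff {g₀ : ℚ} (hpos : 0 < g₀) (hns : ∀ q : ℚ, q ^ 2 ≠ g₀) {n : ℕ} (hn : n ≠ 0)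
    {w : ℂ} (hw : w ^ 2 = g₀) : w ∈ cyc n ↔ discQuad g₀ ∣ (n : ℤ) := by
  obtain ⟨D, r, hD, hr0, hg⟩ := exists_squarefree_part hpos
  have hr : (r : ℂ) ≠ 0 := by exact_mod_cast hr0.ne'
  obtain ⟨s, hs⟩ : ∃ s, s = w / r := ⟨_, rfl⟩
  have hs2 : s ^ 2 = D := by
    rw [hs, div_pow, hw, hg]; push_cast; field_simp
  have hiff : ∀ m, w ∈ cyc m ↔ s ∈ cyc m := by
    intro m
    have hrm : (r : ℂ) ∈ cyc m := by simp
    constructor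
    · intro h; rw [hs]; exact div_mem h hrm
    · intro h
      have : w = s * r := by rw [hs]; field_simp
      rw [this]; exact mul_mem h hrm
  rw [hiff, discQuad_eq hD hr0.ne' hg hns]
  have key : s ∈ cyc n → D ∣ n := squarefree_dvd_of_sqrt_mem hD hr0.ne' hg hns hn hs2
  have hdvd : (if D % 4 = 1 then (D : ℤ) else 4 * D) ∣ (n : ℤ) ↔
      (if D % 4 = 1 then D else 4 * D) ∣ n := by
    split_ifs
    · exact Int.natCast_dvd_natCast
    · exact_mod_cast Int.natCast_dvd_natCast (m := 4 * D) (n := n)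
  rw [hdvd]
  have hI2 : Complex.I ^ 2 = -1 := Complex.I_sq
  rcases Nat.even_or_odd D with he | ho
  · -- `D = 2 m` with `m` odd: the conductor is `8 m`
    obtain ⟨m, rfl⟩ := even_iff_two_dvd.1 he
    have hmodd : Odd m := by
      rw [← Nat.not_even_iff_odd]
      rintro hm
      obtain ⟨k, rfl⟩ := even_iff_two_dvd.1 hm
      have : IsUnit 2 := hD 2 ⟨k, by ring⟩
      exact absurd (Nat.isUnit_iff.1 this) (by norm_num)
    have hm0 : (m : ℂ) ≠ 0 := by exact_mod_cast hmodd.pos.ne'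
    rw [if_neg (by lia), show 4 * (2 * m) = 8 * m by ring]
    obtain ⟨ε, h1, h2, z, hz, hz2⟩ := exists_sqrt_mem_cyc hmodd
    have hε2 : (ε : ℂ) ^ 2 = 1 := by rcases h1 with rfl | rfl <;> simp
    have hz0 : z ≠ 0 := by
      rintro rfl
      exact hm0 (by linear_combination (-(m : ℂ)) * hε2 - (ε : ℂ) * hz2)
    have hsz : (s / z) ^ 2 = 2 * ε := by
      rw [div_pow, hs2, div_eq_iff (pow_ne_zero 2 hz0), hz2]
      push_cast
      linear_combination (-2 * (m : ℂ)) * hε2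
    constructor
    · intro h
      have hmn : m ∣ n := (dvd_mul_left m 2).trans (key h)
      have h8 : 8 ∣ n := eight_dvd_of_sqrt_two_mem hn (z := s / z)
        (by rw [hsz]; rcases h1 with rfl | rfl <;> simp) (div_mem h (cyc_mono hn hmn hz))
      refine Nat.Coprime.mul_dvd_of_dvd_of_dvd ?_ h8 hmn
      exact Nat.Coprime.pow_left 3 hmodd.coprime_two_left
    · intro h
      have h8 : 8 ∣ n := (dvd_mul_right 8 m).trans h
      have hzn := cyc_mono hn ((dvd_mul_left m 8).trans h) hz
      have hI := I_mem_cyc hn ((by norm_num : 4 ∣ 8).trans h8)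
      have hq : s / z ∈ cyc n := by
        rcases h1 with rfl | rfl
        · exact cyc_mono hn h8 (sqrt_two_mem_cyc (by rw [hsz]; simp))
        · have := cyc_mono hn h8 (sqrt_two_mem_cyc (z := Complex.I * (s / z))
            (by rw [mul_pow, hsz, hI2]; simp))
          exact mem_of_sq_eq (z := Complex.I * (Complex.I * (s / z))) (mul_mem hI this)
            (by rw [mul_pow, mul_pow, hI2]; ring)
      have : s = s / z * z := by field_simp
      rw [this]; exact mul_mem hq hzn
  · -- `D` odd: the conductor is `D` or `4 D` according to the sign `ε` in `ε D ≡ 1 mod 4`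
    obtain ⟨ε, h1, h2, z, hz, hz2⟩ := exists_sqrt_mem_cyc ho
    rcases h1 with rfl | rfl
    · rw [if_pos (by lia)]
      refine ⟨key, fun h => cyc_mono hn h ?_⟩
      exact mem_of_sq_eq hz (by rw [hz2, hs2]; simp)
    · rw [if_neg (by lia)]
      have hD0 : D ≠ 0 := ho.pos.ne'
      have hzs : (Complex.I * z) ^ 2 = s ^ 2 := by rw [mul_pow, hz2, hs2, hI2]; simp
      constructor
      · intro h
        have hzn := cyc_mono hn (key h) hz
        have hz0 : z ≠ 0 := by
          rintro rfl
          simp [hD0] at hz2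
        have h4 : 4 ∣ n := by
          refine four_dvd_of_I_mem hn (mem_of_sq_eq (z := s / z) (div_mem h hzn) ?_)
          rw [div_pow, div_eq_iff (pow_ne_zero 2 hz0), ← hzs, mul_pow]
        exact Nat.Coprime.mul_dvd_of_dvd_of_dvd (Nat.Coprime.pow_left 2 ho.coprime_two_left) h4
          (key h)
      · intro h
        refine mem_of_sq_eq (mul_mem (I_mem_cyc hn ((dvd_mul_right 4 D).trans h))
          (cyc_mono hn ((dvd_mul_left D 4).trans h) hz)) hzs

/-! ### Degrees of radical extensions -/

lemma prod_div_pow_mem {F : IntermediateField ℚ ℂ} {α : ℂ} (hα : α ≠ 0) (s : Multiset ℂ)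
    (hs : ∀ z ∈ s, z / α ∈ F) : s.prod / α ^ s.card ∈ F := by
  induction s using Multiset.induction_on with
  | empty => simp
  | cons a s ih =>
    have h1 := hs a (Multiset.mem_cons_self a s)
    have h2 := ih fun z hz => hs z (Multiset.mem_cons_of_mem hz)
    have : (a ::ₘ s).prod / α ^ (a ::ₘ s).card = a / α * (s.prod / α ^ s.card) := by
      rw [Multiset.prod_cons, Multiset.card_cons, pow_succ]
      field_simp
    rw [this]
    exact mul_mem h1 h2

/-- Kummer theory: if `α` is a `t`-th root of a rational number, its degree over `ℚ(ζ_t)` is the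
order of `α` modulo `ℚ(ζ_t)ˣ`. The norm of `α` is `α` to that degree up to a sign and a `t`-th
root of unity, because the conjugates of `α` differ from it by `t`-th roots of unity. -/
lemma pow_mem_iff_finrank_dvd {t : ℕ} (ht : t ≠ 0) {g : ℚ} {α : ℂ} (hα : α ≠ 0)
    (hg : α ^ t = g) (k : ℕ) :
    α ^ k ∈ cyc t ↔ Module.finrank (cyc t) (cyc t)⟮α⟯ ∣ k := by
  have hgF : (g : ℂ) = algebraMap (cyc t) ℂ (algebraMap ℚ (cyc t) g) := by simp
  have hint : IsIntegral (cyc t) α := by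
    refine ⟨X ^ t - C (algebraMap ℚ (cyc t) g), monic_X_pow_sub_C _ ht, ?_⟩
    rw [eval₂_sub, eval₂_pow, eval₂_X, eval₂_C, hg, ← hgF, sub_self]
  rw [IntermediateField.adjoin.finrank hint]
  set n := (minpoly (cyc t) α).natDegree with hn
  have hn0 : 0 < n := minpoly.natDegree_pos hint
  have hmin : ∀ k, 0 < k → α ^ k ∈ cyc t → n ≤ k := by
    intro k hk h
    have hd : minpoly (cyc t) α ∣ X ^ k - C ⟨α ^ k, h⟩ := by
      apply minpoly.dvd
      rw [map_sub, map_pow, aeval_X, aeval_C]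
      exact sub_self _
    have := natDegree_le_of_dvd hd (X_pow_sub_C_ne_zero hk _)
    rwa [natDegree_X_pow_sub_C] at this
  have hpow : α ^ n ∈ cyc t := by
    have hs := IsAlgClosed.splits ((minpoly (cyc t) α).map (algebraMap (cyc t) ℂ))
    have hmon := (minpoly.monic hint).map (algebraMap (cyc t) ℂ)
    have hc := hs.coeff_zero_eq_prod_roots_of_monic hmon
    have hcard := hs.natDegree_eq_card_roots
    rw [natDegree_map] at hcard
    set R := ((minpoly (cyc t) α).map (algebraMap (cyc t) ℂ)).roots
    have hRt : ∀ z ∈ R, z ^ t = g := by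
      intro z hz
      have hd : minpoly (cyc t) α ∣ X ^ t - C (algebraMap ℚ (cyc t) g) := by
        apply minpoly.dvd
        rw [map_sub, map_pow, aeval_X, aeval_C, hg, ← hgF, sub_self]
      have := (mem_roots'.1 hz).2.dvd (Polynomial.map_dvd (algebraMap (cyc t) ℂ) hd)
      rwa [Polynomial.map_sub, Polynomial.map_pow, map_X, map_C, ← hgF, IsRoot, eval_sub, eval_pow,
        eval_X, eval_C, sub_eq_zero] at this
    have hR : ∀ z ∈ R, z / α ∈ cyc t := by
      intro z hz
      apply rootOfUnity_mem_cyc ht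
      rw [div_pow, hRt z hz, hg, div_self]
      rw [← hg]; exact pow_ne_zero t hα
    have h1 := prod_div_pow_mem hα R hR
    rw [← hcard] at h1
    have h2 : R.prod ∈ cyc t := by
      rw [coeff_map, natDegree_map] at hc
      have : R.prod = (-1) ^ n * algebraMap (cyc t) ℂ ((minpoly (cyc t) α).coeff 0) := by
        rw [hc, ← mul_assoc, ← mul_pow]; simp
      rw [this]
      exact mul_mem (pow_mem (neg_mem (one_mem _)) _) (SetLike.coe_mem _)
    have h0 : R.prod ≠ 0 := by
      refine Multiset.prod_ne_zero fun hz => pow_ne_zero t hα ?_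
      rw [hg, ← hRt 0 hz, zero_pow ht]
    have : α ^ n = R.prod / (R.prod / α ^ n) := by field_simp
    rw [this]
    exact div_mem h2 h1
  constructor
  · intro h
    by_contra hk
    have hlt := Nat.mod_lt k hn0
    have hpos : 0 < k % n := Nat.pos_of_ne_zero fun h0 => hk (Nat.dvd_of_mod_eq_zero h0)
    refine absurd (hmin (k % n) hpos ?_) (by lia)
    have : α ^ (k % n) = α ^ k / (α ^ n) ^ (k / n) := by
      rw [eq_div_iff (by positivity), ← pow_mul, ← pow_add, Nat.mod_add_div]
    rw [this]
    exact div_mem h (pow_mem hpow _)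
  · rintro ⟨m, rfl⟩
    rw [pow_mul]
    exact pow_mem hpow _

/-- The splitting field of `X ^ t - g` is `ℚ(ζ_t)(α)` for any root `α`, whence its degree. -/
lemma finrank_splitField {t : ℕ} (ht : t ≠ 0) {g : ℚ} {α : ℂ} (hα : α ≠ 0) (hg : α ^ t = g) :
    Module.finrank ℚ (splitField g t) =
      t.totient * Module.finrank (cyc t) (cyc t)⟮α⟯ := by
  have hP : (X ^ t - C g : ℚ[X]) ≠ 0 := X_pow_sub_C_ne_zero (Nat.pos_of_ne_zero ht) g
  have hroot : ∀ z : ℂ, z ∈ (X ^ t - C g : ℚ[X]).rootSet ℂ ↔ z ^ t = g := by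
    intro z
    rw [mem_rootSet]
    simp [hP, sub_eq_zero]
  have hL : adjoin ℚ ((X ^ t - C g : ℚ[X]).rootSet ℂ) =
      adjoin ℚ ((cyc t : Set ℂ) ∪ {α}) := by
    apply le_antisymm
    · rw [adjoin_le_iff]
      intro z hz
      have hz := (hroot z).1 hz
      have h1 : z / α ∈ cyc t := by
        apply rootOfUnity_mem_cyc ht
        rw [div_pow, hz, hg, div_self]
        rw [← hg]; exact pow_ne_zero t hα
      have : z = z / α * α := by field_simp
      rw [this]
      exact mul_mem (subset_adjoin _ _ (Or.inl h1)) (subset_adjoin _ _ (Or.inr rfl))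
    · have hαL : α ∈ adjoin ℚ ((X ^ t - C g : ℚ[X]).rootSet ℂ) :=
        subset_adjoin _ _ ((hroot α).2 hg)
      have hcL : cyc t ≤ adjoin ℚ ((X ^ t - C g : ℚ[X]).rootSet ℂ) := by
        rw [cyc, adjoin_simple_le_iff]
        have : zet t = zet t * α / α := by field_simp
        rw [this]
        refine div_mem (subset_adjoin _ _ ((hroot _).2 ?_)) hαL
        rw [mul_pow, (zet_spec ht).pow_eq_one, hg, one_mul]
      rw [adjoin_le_iff]
      rintro z (hz | rfl)
      · exact hcL hz
      · exact hαL
  have hsf := adjoin_rootSet_isSplittingField (K := ℚ)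
    (IsAlgClosed.splits ((X ^ t - C g : ℚ[X]).map (algebraMap ℚ ℂ)))
  rw [← restrictScalars_adjoin ℚ (cyc t) {α}] at hL
  have h1 := (IsSplittingField.algEquiv _ (X ^ t - C g : ℚ[X]) (h := hsf)).toLinearEquiv.finrank_eq
  rw [hL] at h1
  have h2 := Module.finrank_mul_finrank ℚ (cyc t) (cyc t)⟮α⟯
  rw [finrank_cyc ht] at h2
  rw [h2]
  exact h1.symm

/-! ### The order of the root modulo the cyclotomic field -/

/-- The roots of powers of `g₀` that are rational are powers of `g₀`, as `g₀` is not an exact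
power. -/
lemma dvd_of_pow_eq {g₀ q : ℚ} (hpos : 0 < g₀) (hnp : ¬ ∃ (r : ℚ) (k : ℕ), 2 ≤ k ∧ r ^ k = g₀)
    (hq : 0 < q) {a b : ℕ} (ha : a ≠ 0) (h : q ^ a = g₀ ^ b) : a ∣ b := by
  obtain ⟨d, a', b', hd, hcop, rfl, rfl⟩ := Nat.exists_coprime' (Nat.gcd_pos_of_pos_left b
    (Nat.pos_of_ne_zero ha))
  have h' : q ^ a' = g₀ ^ b' := by
    rw [pow_mul, pow_mul] at h
    exact (pow_left_inj₀ (by positivity) (by positivity) hd.ne').1 h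
  have hbez := Nat.gcd_eq_gcd_ab a' b'
  rw [Nat.Coprime.gcd_eq_one hcop] at hbez
  have ha' : a' = 1 := by
    by_contra hne
    have ha0 : a' ≠ 0 := by rintro rfl; simp at ha
    -- Bezout: `u a' + v b' = 1` makes `g₀ = (g₀ ^ u q ^ v) ^ a'`
    refine hnp ⟨g₀ ^ (Nat.gcdA a' b') * q ^ (Nat.gcdB a' b'), a', by lia, ?_⟩
    rw [mul_pow, ← zpow_natCast (q ^ _) a', ← zpow_mul, mul_comm _ (a' : ℤ), zpow_mul, zpow_natCast,
      h', ← zpow_natCast (g₀ ^ _) a', ← zpow_mul, ← zpow_natCast g₀ b', ← zpow_mul,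
      ← zpow_add₀ hpos.ne', mul_comm _ (a' : ℤ), ← hbez]
    simp
  rw [ha', one_mul]
  exact dvd_mul_left _ _

/-- `1, ζ_{2t}` span `ℚ(ζ_{2t})` over `ℚ(ζ_t)`, since `ζ_{2t} ^ 2 = ζ_t`. -/
lemma exists_add_mul_of_mem_cyc_two_mul {t : ℕ} (ht : t ≠ 0) {x : ℂ} (hx : x ∈ cyc (2 * t)) :
    ∃ a ∈ cyc t, ∃ b ∈ cyc t, x = a + b * zet (2 * t) := by
  have hsq : zet (2 * t) ^ 2 ∈ cyc t := by rw [zet_two_mul_sq]; exact zet_mem t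
  have hint : IsIntegral ℚ (zet (2 * t)) :=
    ((zet_spec (n := 2 * t) (by lia)).isIntegral (by lia)).tower_top
  have hx' : x ∈ Algebra.adjoin ℚ {zet (2 * t)} := by
    rw [← adjoin_simple_toSubalgebra_of_isAlgebraic hint.isAlgebraic]
    exact hx
  clear hx
  induction hx' using Algebra.adjoin_induction with
  | mem x hx =>
    rw [Set.mem_singleton_iff] at hx
    exact ⟨0, zero_mem _, 1, one_mem _, by rw [hx]; ring⟩
  | algebraMap r => exact ⟨_, (cyc t).algebraMap_mem r, 0, zero_mem _, by ring⟩
  | add x y hx hy ihx ihy =>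
    obtain ⟨a, ha, b, hb, rfl⟩ := ihx
    obtain ⟨c, hc, d, hd, rfl⟩ := ihy
    exact ⟨a + c, add_mem ha hc, b + d, add_mem hb hd, by ring⟩
  | mul x y hx hy ihx ihy =>
    obtain ⟨a, ha, b, hb, rfl⟩ := ihx
    obtain ⟨c, hc, d, hd, rfl⟩ := ihy
    exact ⟨a * c + b * d * zet (2 * t) ^ 2,
      add_mem (mul_mem ha hc) (mul_mem (mul_mem hb hd) hsq),
      a * d + b * c, add_mem (mul_mem ha hd) (mul_mem hb hc), by ring⟩

/-- With `ω = ζ_{2t}`, for which `ω² ∈ ℚ(ζ_t)`, the quadratic extensions of `ℚ(ζ_t)` generated by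
`ω` and by a square root `s` coincide exactly when `ω s ∈ ℚ(ζ_t)`. -/
lemma zet_mul_mem_iff {t : ℕ} (ht : t ≠ 0) (he : Even t) {s : ℂ} (hs0 : s ≠ 0)
    (hs : s ^ 2 ∈ cyc t) :
    zet (2 * t) * s ∈ cyc t ↔ s ∉ cyc t ∧ s ∈ cyc (2 * t) := by
  have hω := zet_two_mul_not_mem ht he
  have hω0 : zet (2 * t) ≠ 0 := Complex.exp_ne_zero _
  have hω2 : zet (2 * t) ^ 2 ∈ cyc t := by rw [zet_two_mul_sq]; exact zet_mem t
  constructor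
  · intro h
    constructor
    · intro h'
      apply hω
      have : zet (2 * t) = zet (2 * t) * s / s := by field_simp
      rw [this]; exact div_mem h h'
    · have : s = zet (2 * t) * s / zet (2 * t) := by field_simp
      rw [this]
      exact div_mem (cyc_mono (by lia) (dvd_mul_left t 2) h) (zet_mem _)
  · rintro ⟨h1, h2⟩
    obtain ⟨a, ha, b, hb, hab⟩ := exists_add_mul_of_mem_cyc_two_mul ht h2
    have hb0 : b ≠ 0 := by
      rintro rfl
      apply h1
      rw [hab]; simpa using ha
    -- comparing `s ^ 2 = a ^ 2 + b ^ 2 ω ^ 2 + 2 a b ω ∈ ℚ(ζ_t)` forces `a b = 0`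
    have ha0 : a = 0 := by
      by_contra ha0
      apply hω
      have : zet (2 * t) = (s ^ 2 - a ^ 2 - b ^ 2 * zet (2 * t) ^ 2) / (2 * a * b) := by
        rw [eq_div_iff (mul_ne_zero (mul_ne_zero two_ne_zero ha0) hb0), hab]; ring
      rw [this]
      exact div_mem (sub_mem (sub_mem hs (pow_mem ha 2)) (mul_mem (pow_mem hb 2) hω2))
        (mul_mem (mul_mem (ofNat_mem _ 2) ha) hb)
    have : zet (2 * t) * s = b * zet (2 * t) ^ 2 := by rw [hab, ha0]; ring
    rw [this]; exact mul_mem hb hω2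

section degree

variable {g₀ : ℚ} {h t : ℕ} {ρ : ℝ}

lemma reduced_ne_zero (ht : t ≠ 0) : t / t.gcd h ≠ 0 :=
  (Nat.div_pos (Nat.gcd_le_left h (Nat.pos_of_ne_zero ht))
    (Nat.gcd_pos_of_pos_left h (Nat.pos_of_ne_zero ht))).ne'

lemma root_pow_reduced (hpos : 0 < g₀) (hρ : 0 < ρ) (ht : t ≠ 0) (hρt : ρ ^ t = (g₀ : ℝ) ^ h) :
    ρ ^ (t / t.gcd h) = (g₀ : ℝ) ^ (h / t.gcd h) := by
  have hg : (0 : ℝ) < g₀ := by exact_mod_cast hpos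
  have hd : t.gcd h ≠ 0 := (Nat.gcd_pos_of_pos_left h (Nat.pos_of_ne_zero ht)).ne'
  refine (pow_left_inj₀ (by positivity) (by positivity) hd).1 ?_
  rw [← pow_mul, ← pow_mul, Nat.div_mul_cancel (Nat.gcd_dvd_left _ _),
    Nat.div_mul_cancel (Nat.gcd_dvd_right _ _), hρt]

/-- Only the multiples of `t_h / 2` are exponents of powers of `ρ = g₀^{h/t}` lying in some
cyclotomic field. -/
lemma dvd_two_mul_of_pow_mem (hpos : 0 < g₀)
    (hnp : ¬ ∃ (r : ℚ) (k : ℕ), 2 ≤ k ∧ r ^ k = g₀) (hρ : 0 < ρ) (ht : t ≠ 0)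
    (hρt : ρ ^ t = (g₀ : ℝ) ^ h) {m k : ℕ} (hm : m ≠ 0) (hk : (ρ : ℂ) ^ k ∈ cyc m) :
    t / t.gcd h ∣ 2 * k := by
  have hd : 0 < t.gcd h := Nat.gcd_pos_of_pos_left h (Nat.pos_of_ne_zero ht)
  obtain ⟨r, hr⟩ := sq_rat_of_real_mem_cyc hm (x := ρ ^ k) (by exact_mod_cast hk) ht
    (q := g₀ ^ (h * k)) (by rw [← pow_mul, mul_comm k, pow_mul, hρt, ← pow_mul]; push_cast; rfl)
  have hr0 : 0 < r := by
    have : (0 : ℝ) < r := by rw [← hr]; positivity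
    exact_mod_cast this
  have hrt : r ^ t = g₀ ^ (h * (2 * k)) := by
    have : (r : ℝ) ^ t = (g₀ : ℝ) ^ (h * (2 * k)) := by
      rw [← hr, pow_mul, ← hρt]; ring
    exact_mod_cast this
  have h1 := dvd_of_pow_eq hpos hnp hr0 ht hrt
  refine (Nat.coprime_div_gcd_div_gcd hd).dvd_of_dvd_mul_left ?_
  have h2 := Nat.div_dvd_div (Nat.gcd_dvd_left t h) h1
  rwa [Nat.mul_comm h, Nat.mul_div_assoc _ (Nat.gcd_dvd_right t h), mul_comm (2 * k)] at h2

/-- If `t_h = 2 U`, then `ρ ^ U` is `√g₀` up to a nonzero rational factor. -/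
lemma mul_pow_half_mem_iff (hpos : 0 < g₀) (hρ : 0 < ρ) (ht : t ≠ 0)
    (hρt : ρ ^ t = (g₀ : ℝ) ^ h) {U : ℕ} (hU : t / t.gcd h = 2 * U)
    (K : IntermediateField ℚ ℂ) (z : ℂ) :
    z * (ρ : ℂ) ^ U ∈ K ↔ z * (√(g₀ : ℝ) : ℝ) ∈ K := by
  have hg : (0 : ℝ) < g₀ := by exact_mod_cast hpos
  have hd : 0 < t.gcd h := Nat.gcd_pos_of_pos_left h (Nat.pos_of_ne_zero ht)
  have hcop := Nat.coprime_div_gcd_div_gcd hd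
  rw [hU] at hcop
  obtain ⟨j, hj⟩ := Nat.coprime_two_left.1 (Nat.Coprime.coprime_mul_right hcop)
  have h1 : ρ ^ U = (g₀ : ℝ) ^ j * √(g₀ : ℝ) := by
    refine (pow_left_inj₀ (by positivity) (by positivity) two_ne_zero).1 ?_
    rw [← pow_mul, mul_comm U 2, ← hU, root_pow_reduced hpos hρ ht hρt, hj, mul_pow,
      Real.sq_sqrt hg.le]
    ring
  have h2 : (ρ : ℂ) ^ U = ((g₀ ^ j : ℚ) : ℂ) * (√(g₀ : ℝ) : ℝ) := by
    rw [← Complex.ofReal_pow, h1]; push_cast; rfl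
  have hr : ((g₀ ^ j : ℚ) : ℂ) ≠ 0 := by
    have : g₀ ^ j ≠ 0 := by positivity
    exact_mod_cast this
  have hrK : ((g₀ ^ j : ℚ) : ℂ) ∈ K := by simpa using K.algebraMap_mem (g₀ ^ j)
  rw [h2]
  constructor
  · intro hz
    have : z * (√(g₀ : ℝ) : ℝ) = z * (((g₀ ^ j : ℚ) : ℂ) * (√(g₀ : ℝ) : ℝ)) / ((g₀ ^ j : ℚ) : ℂ) := by
      field_simp
    rw [this]; exact div_mem hz hrK
  · intro hz
    rw [mul_left_comm]; exact mul_mem hrK hz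

lemma sqrt_mem_cyc_iff' (hpos : 0 < g₀)
    (hnp : ¬ ∃ (r : ℚ) (k : ℕ), 2 ≤ k ∧ r ^ k = g₀) {n : ℕ} (hn : n ≠ 0) :
    ((√(g₀ : ℝ) : ℝ) : ℂ) ∈ cyc n ↔ discQuad g₀ ∣ (n : ℤ) := by
  have hg : (0 : ℝ) < g₀ := by exact_mod_cast hpos
  refine sqrt_mem_cyc_iff hpos (fun q hq => hnp ⟨q, 2, le_rfl, hq⟩) hn ?_
  rw [← Complex.ofReal_pow, Real.sq_sqrt hg.le]
  simp

/-- The order `n` of `ρ = g₀^{h/t}` modulo `ℚ(ζ_t)ˣ`. It divides `t_h` and is divisible by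
`t_h / 2`, and it equals `t_h / 2` exactly when `√g₀ ∈ ℚ(ζ_t)`. -/
lemma order_of_real_root (hpos : 0 < g₀)
    (hnp : ¬ ∃ (r : ℚ) (k : ℕ), 2 ≤ k ∧ r ^ k = g₀) (hρ : 0 < ρ) (ht : t ≠ 0)
    (hρt : ρ ^ t = (g₀ : ℝ) ^ h) {n : ℕ} (hn : ∀ k, (ρ : ℂ) ^ k ∈ cyc t ↔ n ∣ k) :
    t / t.gcd h = n * if 2 ∣ t / t.gcd h ∧ discQuad g₀ ∣ (t : ℤ) then 2 else 1 := by
  have h1 : t / t.gcd h ∣ 2 * n :=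
    dvd_two_mul_of_pow_mem hpos hnp hρ ht hρt ht ((hn n).2 dvd_rfl)
  have h2 : n ∣ t / t.gcd h := by
    rw [← hn, ← Complex.ofReal_pow, root_pow_reduced hpos hρ ht hρt]
    simpa using pow_mem ((cyc t).algebraMap_mem g₀) (h / t.gcd h)
  by_cases hT : 2 ∣ t / t.gcd h
  · obtain ⟨U, hU⟩ := hT
    have h3 := hn U
    rw [← one_mul ((ρ : ℂ) ^ U), mul_pow_half_mem_iff hpos hρ ht hρt hU, one_mul,
      sqrt_mem_cyc_iff' hpos hnp ht] at h3
    rw [hU] at h1 h2 ⊢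
    have hU0 : 0 < U := by
      have := reduced_ne_zero (h := h) ht
      lia
    obtain ⟨c, rfl⟩ : U ∣ n := Nat.dvd_of_mul_dvd_mul_left two_pos h1
    by_cases hc : discQuad g₀ ∣ (t : ℤ)
    · rw [if_pos ⟨dvd_mul_right 2 U, hc⟩, mul_comm 2 U, Nat.dvd_antisymm (h3.1 hc) (dvd_mul_right U c)]
    · rw [if_neg (by tauto)]
      have hc2 : c ∣ 2 := by
        rw [mul_comm 2] at h2
        exact Nat.dvd_of_mul_dvd_mul_left hU0 h2
      rcases (Nat.dvd_prime Nat.prime_two).1 hc2 with rfl | rfl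
      · exact absurd (h3.2 (by simp)) hc
      · ring
  · rw [if_neg (by tauto), mul_one]
    refine Nat.dvd_antisymm ?_ h2
    exact (Nat.Coprime.symm ((Nat.Prime.coprime_iff_not_dvd Nat.prime_two).2 hT)).dvd_of_dvd_mul_left h1

/-- For even `t`, the order `n` of `ζ_{2t} g₀^{h/t}` modulo `ℚ(ζ_t)ˣ`. For odd `t_h` the factor
`ζ_{2t}` doubles the order; for even `t_h = 2 U` the question is whether `ζ_{2t} ^ U √g₀` lies in
`ℚ(ζ_t)`, and only the parity of `U` matters, as `ζ_{2t} ^ 2 = ζ_t`. -/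
lemma order_of_twisted_root (hpos : 0 < g₀)
    (hnp : ¬ ∃ (r : ℚ) (k : ℕ), 2 ≤ k ∧ r ^ k = g₀) (hρ : 0 < ρ) (ht : t ≠ 0) (he : Even t)
    (hρt : ρ ^ t = (g₀ : ℝ) ^ h) {n : ℕ} (hn : ∀ k, (zet (2 * t) * ρ) ^ k ∈ cyc t ↔ n ∣ k) :
    if ¬ 2 ∣ t / t.gcd h then n = 2 * (t / t.gcd h) else
      t / t.gcd h = n * (if t / t.gcd h % 4 = 2 then
          (if ¬ discQuad g₀ ∣ (t : ℤ) ∧ discQuad g₀ ∣ (2 * t : ℤ) then 2 else 1)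
        else if discQuad g₀ ∣ (t : ℤ) then 2 else 1) := by
  have h2t : 2 * t ≠ 0 := by lia
  have hω2 : zet (2 * t) ^ 2 ∈ cyc t := by rw [zet_two_mul_sq]; exact zet_mem t
  have hω0 : zet (2 * t) ≠ 0 := Complex.exp_ne_zero _
  have hω := zet_two_mul_not_mem ht he
  have heven : ∀ (k : ℕ) (z : ℂ), zet (2 * t) ^ (2 * k) * z ∈ cyc t ↔ z ∈ cyc t := by
    intro k z
    have hk : zet (2 * t) ^ (2 * k) ∈ cyc t := by rw [pow_mul]; exact pow_mem hω2 k
    refine ⟨fun hz => ?_, mul_mem hk⟩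
    have : z = zet (2 * t) ^ (2 * k) * z / zet (2 * t) ^ (2 * k) := by field_simp
    rw [this]; exact div_mem hz hk
  have hodd : ∀ (k : ℕ) (z : ℂ),
      zet (2 * t) ^ (2 * k + 1) * z ∈ cyc t ↔ zet (2 * t) * z ∈ cyc t := by
    intro k z
    rw [pow_succ, mul_assoc, heven]
  have hT0 := reduced_ne_zero (h := h) ht
  have hρT : (ρ : ℂ) ^ (t / t.gcd h) = ((g₀ ^ (h / t.gcd h) : ℚ) : ℂ) := by
    rw [← Complex.ofReal_pow, root_pow_reduced hpos hρ ht hρt]; push_cast; rfl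
  have hq : ((g₀ ^ (h / t.gcd h) : ℚ) : ℂ) ∈ cyc t := by
    simpa using (cyc t).algebraMap_mem (g₀ ^ (h / t.gcd h))
  have hq0 : ((g₀ ^ (h / t.gcd h) : ℚ) : ℂ) ≠ 0 := by
    have : g₀ ^ (h / t.gcd h) ≠ 0 := by positivity
    exact_mod_cast this
  have h1 : t / t.gcd h ∣ 2 * n := by
    have := cyc_mono h2t (dvd_mul_left t 2) ((hn n).2 dvd_rfl)
    refine dvd_two_mul_of_pow_mem hpos hnp hρ ht hρt h2t (k := n) ?_
    have heq : (ρ : ℂ) ^ n = (zet (2 * t) * ρ) ^ n / zet (2 * t) ^ n := by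
      rw [mul_pow]; field_simp
    rw [heq]
    exact div_mem this (pow_mem (zet_mem _) n)
  by_cases hT : 2 ∣ t / t.gcd h
  · rw [if_neg (not_not.2 hT)]
    have h2 : n ∣ t / t.gcd h := by
      obtain ⟨U, hU⟩ := hT
      rw [← hn, mul_pow, hρT, hU, heven]
      exact hq
    obtain ⟨U, hU⟩ := hT
    have h3 := hn U
    rw [mul_pow, mul_pow_half_mem_iff hpos hρ ht hρt hU] at h3
    have h4 := sqrt_mem_cyc_iff' hpos hnp ht
    have h5 := sqrt_mem_cyc_iff' hpos hnp h2t
    have hiff : n ∣ U ↔ (if 2 * U % 4 = 2 then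
          (¬ discQuad g₀ ∣ (t : ℤ) ∧ discQuad g₀ ∣ (2 * t : ℤ))
        else discQuad g₀ ∣ (t : ℤ)) := by
      rw [← h3]
      rcases Nat.even_or_odd' U with ⟨k, rfl | rfl⟩
      · rw [if_neg (by lia), heven, h4]
      · have hg : (0 : ℝ) < g₀ := by exact_mod_cast hpos
        rw [if_pos (by lia), hodd, zet_mul_mem_iff ht he, h4, h5]
        · push_cast; rfl
        · exact_mod_cast (Real.sqrt_pos.2 hg).ne'
        · rw [← Complex.ofReal_pow, Real.sq_sqrt hg.le]
          simp
    rw [hU] at h1 h2 hT0 ⊢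
    obtain ⟨c, rfl⟩ : U ∣ n := Nat.dvd_of_mul_dvd_mul_left two_pos h1
    have hU0 : 0 < U := by lia
    have hc2 : c ∣ 2 := by
      rw [mul_comm 2] at h2
      exact Nat.dvd_of_mul_dvd_mul_left hU0 h2
    have hc1 : U * c ∣ U ↔ c = 1 := by
      refine ⟨fun hd => Nat.dvd_one.1 (Nat.dvd_of_mul_dvd_mul_left hU0 (by rwa [mul_one])), ?_⟩
      rintro rfl
      simp
    rw [hc1] at hiff
    rcases (Nat.dvd_prime Nat.prime_two).1 hc2 with rfl | rfl
    · simp only [true_iff] at hiff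
      split_ifs at hiff ⊢ <;> ring
    · simp only [OfNat.ofNat_ne_one, false_iff] at hiff
      split_ifs at hiff ⊢ <;> ring
  · rw [if_pos hT]
    have h2 : n ∣ 2 * (t / t.gcd h) := by
      rw [← hn, mul_pow, heven, mul_comm 2, pow_mul, hρT]
      exact pow_mem hq 2
    obtain ⟨c, hc⟩ : t / t.gcd h ∣ n :=
      (Nat.Coprime.symm ((Nat.Prime.coprime_iff_not_dvd Nat.prime_two).2 hT)).dvd_of_dvd_mul_left h1
    have hne : n ≠ t / t.gcd h := by
      intro hnT
      have h3 := (hn _).2 hnT.dvd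
      obtain ⟨k, hk⟩ : Odd (t / t.gcd h) := by rwa [← Nat.not_even_iff_odd, even_iff_two_dvd]
      rw [mul_pow, hρT] at h3
      nth_rewrite 1 [hk] at h3
      rw [hodd] at h3
      apply hω
      rw [show zet (2 * t) = zet (2 * t) * ((g₀ ^ (h / t.gcd h) : ℚ) : ℂ) /
        ((g₀ ^ (h / t.gcd h) : ℚ) : ℂ) by field_simp]
      exact div_mem h3 hq
    have hc2 : c ∣ 2 := by
      rw [hc, mul_comm 2] at h2
      exact Nat.dvd_of_mul_dvd_mul_left (Nat.pos_of_ne_zero hT0) h2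
    rcases (Nat.dvd_prime Nat.prime_two).1 hc2 with rfl | rfl
    · exact absurd (by rw [hc, mul_one]) hne
    · rw [hc, mul_comm]

end degree

/-! ### The degree formula -/

/-- the degree `[ℚ(ζ_t, g^{1/t}) : ℚ] = φ(t)·t_h/ν` with `ν` explicit. -/
theorem stmt8 (g g₀ : ℚ) (h t : ℕ) (hd : Decomp g g₀ h) (ht : 1 ≤ t) :
    (Module.finrank ℚ (splitField g t) : ℚ) =
      (Nat.totient t : ℚ) * ((t / Nat.gcd t h : ℕ) : ℚ) /
        (if 0 < g then
          (if 2 ∣ t / Nat.gcd t h ∧ discQuad g₀ ∣ (t : ℤ) then 2 else 1)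
        else if ¬ 2 ∣ t then 1
        else if ¬ 2 ∣ t / Nat.gcd t h then 1 / 2
        else if t / Nat.gcd t h % 4 = 2 then
          (if ¬ discQuad g₀ ∣ (t : ℤ) ∧ discQuad g₀ ∣ (2 * t : ℤ) then 2 else 1)
        else if discQuad g₀ ∣ (t : ℤ) then 2 else 1 : ℚ) := by
  have ht0 : t ≠ 0 := by lia
  have hpos := hd.g₀_pos
  have hnp := hd.not_power
  have hg : (0 : ℝ) < g₀ := by exact_mod_cast hpos
  have htR : (t : ℝ) ≠ 0 := by exact_mod_cast ht0
  have hgh : 0 < g₀ ^ h := by positivity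
  obtain ⟨ρ, hρ, hρt⟩ : ∃ ρ : ℝ, 0 < ρ ∧ ρ ^ t = (g₀ : ℝ) ^ h := by
    refine ⟨((g₀ : ℝ) ^ h) ^ (1 / (t : ℝ)), by positivity, ?_⟩
    rw [← Real.rpow_natCast, ← Real.rpow_mul (by positivity), one_div, inv_mul_cancel₀ htR,
      Real.rpow_one]
  have hρC : (ρ : ℂ) ≠ 0 := by exact_mod_cast hρ.ne'
  have hρtC : (ρ : ℂ) ^ t = ((g₀ ^ h : ℚ) : ℂ) := by
    rw [← Complex.ofReal_pow, hρt]; push_cast; rfl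
  rcases hd.eq with hgeq | hgeq
  · have hgpos : 0 < g := by rw [hgeq]; exact hgh
    rw [← hgeq] at hρtC
    rw [if_pos hgpos, finrank_splitField ht0 hρC hρtC]
    have hT := order_of_real_root hpos hnp hρ ht0 hρt
      (pow_mem_iff_finrank_dvd ht0 hρC hρtC)
    nth_rewrite 1 [hT]
    push_cast
    split_ifs <;> ring
  · have hgneg : ¬ 0 < g := by rw [hgeq]; linarith
    rw [if_neg hgneg]
    by_cases he : 2 ∣ t
    · have hω0 : zet (2 * t) ≠ 0 := Complex.exp_ne_zero _
      have hωt : zet (2 * t) ^ t = -1 := by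
        rw [zet_mul_pow 2 ht0]
        exact (zet_spec two_ne_zero).eq_neg_one_of_two_right
      have hα : (zet (2 * t) * ρ) ^ t = (g : ℂ) := by
        rw [mul_pow, hωt, hρtC, hgeq]; push_cast; ring
      rw [if_neg (not_not.2 he), finrank_splitField ht0 (mul_ne_zero hω0 hρC) hα]
      have hT := order_of_twisted_root hpos hnp hρ ht0 (even_iff_two_dvd.2 he) hρt
        (pow_mem_iff_finrank_dvd ht0 (mul_ne_zero hω0 hρC) hα)
      by_cases h2 : 2 ∣ t / t.gcd h
      · rw [if_neg (not_not.2 h2)] at hT ⊢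
        nth_rewrite 1 [hT]
        push_cast
        split_ifs <;> ring
      · rw [if_pos h2] at hT ⊢
        rw [hT]
        push_cast
        ring
    · -- for odd `t` the real root `-ρ` is available
      have hodd : Odd t := by rwa [← Nat.not_even_iff_odd, even_iff_two_dvd]
      have hα : (-ρ : ℂ) ^ t = (g : ℂ) := by
        rw [hodd.neg_pow, hρtC, hgeq]; push_cast; ring
      rw [if_pos he, finrank_splitField ht0 (neg_ne_zero.2 hρC) hα]
      have hT := order_of_real_root hpos hnp hρ ht0 hρt
        (n := Module.finrank (cyc t) (cyc t)⟮(-ρ : ℂ)⟯) (fun k => by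
          rw [← pow_mem_iff_finrank_dvd ht0 (neg_ne_zero.2 hρC) hα]
          rcases Nat.even_or_odd k with hk | hk
          · rw [hk.neg_pow]
          · rw [hk.neg_pow, neg_mem_iff])
      have hTodd : ¬ 2 ∣ t / t.gcd h := fun h2 =>
        he (h2.trans (Nat.div_dvd_of_dvd (Nat.gcd_dvd_left t h)))
      rw [if_neg (by tauto), mul_one] at hT
      rw [← hT]
      push_cast
      ring
end
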